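/- arXiv:2206.00079 — 2 statements merged into one kernel-verified Lean document; each statement's English description precedes it below -/
import Mathlib

section
/- Let (M,g) be a Riemannian manifold with embedded boundary hypersurface, Σ an open subset of ∂M, and h a symmetric (0,2)-tensor such that h and g are analytic in coordinate charts containing the analytic hypersurface Σ. Then there is an analytic vector field X in a collar neighborhood of Σ with X = 0 on Σ and (L_X g)(ν,·) = h(ν,·), where ν is the parallel extension of the unit normal to Σ. -/
noncomputable section

open scoped BigOperators
open MeasureTheory Filter

/-- Points of the coordinate chart `ℝⁿ`. -/
abbrev Pt (n : ℕ) := Fin n → ℝ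

/-- Partial derivative of a scalar function in the `i`-th coordinate direction. -/
def pd {n : ℕ} (i : Fin n) (f : Pt n → ℝ) (x : Pt n) : ℝ :=
  fderiv ℝ f x (Pi.single i 1)

/-- Inverse metric `g^{ij}` (pointwise matrix inverse). -/
def ginv {n : ℕ} (g : Pt n → Fin n → Fin n → ℝ) (x : Pt n) (i j : Fin n) : ℝ :=
  (Matrix.of (g x))⁻¹ i j

/-- Christoffel symbols `Γ^k_{ij}` of the metric `g`. -/
def chr {n : ℕ} (g : Pt n → Fin n → Fin n → ℝ) (x : Pt n) (k i j : Fin n) : ℝ :=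
  (1/2) * ∑ l, ginv g x k l *
    (pd i (fun y => g y j l) x + pd j (fun y => g y i l) x - pd l (fun y => g y i j) x)

/-- Covariant derivative of a covector field: `X_{i;j}`. -/
def cdCov {n : ℕ} (g : Pt n → Fin n → Fin n → ℝ) (X : Pt n → Fin n → ℝ)
    (x : Pt n) (i j : Fin n) : ℝ :=
  pd j (fun y => X y i) x - ∑ k, chr g x k i j * X x k

/-- Covariant derivative of a vector field: `X^i_{;j}`. -/
def cdVec {n : ℕ} (g : Pt n → Fin n → Fin n → ℝ) (X : Pt n → Fin n → ℝ)
    (x : Pt n) (i j : Fin n) : ℝ :=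
  pd j (fun y => X y i) x + ∑ k, chr g x i k j * X x k

/-- Covariant derivative of a symmetric (0,2)-tensor: `h_{ij;k}`. -/
def cd2 {n : ℕ} (g : Pt n → Fin n → Fin n → ℝ) (h : Pt n → Fin n → Fin n → ℝ)
    (x : Pt n) (i j k : Fin n) : ℝ :=
  pd k (fun y => h y i j) x - ∑ l, chr g x l i k * h x l j - ∑ l, chr g x l j k * h x i l

/-- Second covariant derivative of a covector field: `X_{i;jk}`. -/
def cdCov2 {n : ℕ} (g : Pt n → Fin n → Fin n → ℝ) (X : Pt n → Fin n → ℝ)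
    (x : Pt n) (i j k : Fin n) : ℝ :=
  cd2 g (fun y a b => cdCov g X y a b) x i j k

/-- Riemann curvature tensor `R^l_{ijk}`. -/
def riem {n : ℕ} (g : Pt n → Fin n → Fin n → ℝ) (x : Pt n) (l i j k : Fin n) : ℝ :=
  pd j (fun y => chr g y l i k) x - pd k (fun y => chr g y l i j) x
  + ∑ m, chr g x l m j * chr g x m i k - ∑ m, chr g x l m k * chr g x m i j

/-- Riemann curvature with all indices lowered. -/
def riemLow {n : ℕ} (g : Pt n → Fin n → Fin n → ℝ) (x : Pt n) (a b c d : Fin n) : ℝ :=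
  ∑ l, g x a l * riem g x l b c d

/-- Ricci curvature `R_{ij}`. -/
def ric {n : ℕ} (g : Pt n → Fin n → Fin n → ℝ) (x : Pt n) (i j : Fin n) : ℝ :=
  ∑ l, riem g x l i l j

/-- Lower the index of a vector field using `g`. -/
def lowerV {n : ℕ} (g : Pt n → Fin n → Fin n → ℝ) (X : Pt n → Fin n → ℝ)
    (x : Pt n) (i : Fin n) : ℝ :=
  ∑ j, g x i j * X x j

/-- Lie derivative of the metric `g` along the vector field `X`:
`(L_X g)_{ij} = X_{i;j} + X_{j;i}` (index lowered by `g`). -/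
def lieg {n : ℕ} (g : Pt n → Fin n → Fin n → ℝ) (X : Pt n → Fin n → ℝ)
    (x : Pt n) (i j : Fin n) : ℝ :=
  cdCov g (lowerV g X) x i j + cdCov g (lowerV g X) x j i

/-- Hessian `f_{;ij}`. -/
def hess {n : ℕ} (g : Pt n → Fin n → Fin n → ℝ) (f : Pt n → ℝ)
    (x : Pt n) (i j : Fin n) : ℝ :=
  cdCov g (fun y a => pd a f y) x i j

/-- Laplace–Beltrami operator on functions. -/
def lapf {n : ℕ} (g : Pt n → Fin n → Fin n → ℝ) (f : Pt n → ℝ) (x : Pt n) : ℝ :=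
  ∑ i, ∑ j, ginv g x i j * hess g f x i j

/-- Trace of a (0,2)-tensor with respect to `g`. -/
def trT {n : ℕ} (g : Pt n → Fin n → Fin n → ℝ) (h : Pt n → Fin n → Fin n → ℝ)
    (x : Pt n) : ℝ :=
  ∑ i, ∑ j, ginv g x i j * h x i j

/-- Divergence of a (0,2)-tensor, as a covector. -/
def divT {n : ℕ} (g : Pt n → Fin n → Fin n → ℝ) (h : Pt n → Fin n → Fin n → ℝ)
    (x : Pt n) (i : Fin n) : ℝ :=
  ∑ j, ∑ k, ginv g x j k * cd2 g h x i j k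

/-- Bianchi operator `β_g h = -div_g h + (1/2) d (tr_g h)`. -/
def bianchi {n : ℕ} (g : Pt n → Fin n → Fin n → ℝ) (h : Pt n → Fin n → Fin n → ℝ)
    (x : Pt n) (i : Fin n) : ℝ :=
  -divT g h x i + (1/2) * pd i (fun y => trT g h y) x

/-- Gradient vector field `(∇f)^i`. -/
def gradV {n : ℕ} (g : Pt n → Fin n → Fin n → ℝ) (f : Pt n → ℝ)
    (x : Pt n) (i : Fin n) : ℝ :=
  ∑ j, ginv g x i j * pd j f x

/-- The tensor is symmetric. -/
def symT {n : ℕ} (g : Pt n → Fin n → Fin n → ℝ) : Prop :=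
  ∀ x i j, g x i j = g x j i

/-- `g` is pointwise positive definite. -/
def posdef {n : ℕ} (g : Pt n → Fin n → Fin n → ℝ) : Prop :=
  ∀ (x : Pt n) (v : Fin n → ℝ), v ≠ 0 → 0 < ∑ i, ∑ j, g x i j * v i * v j

/-- Smooth componentwise. -/
def smoothT {n : ℕ} (g : Pt n → Fin n → Fin n → ℝ) : Prop :=
  ∀ i j, ContDiff ℝ (⊤ : ℕ∞) (fun x => g x i j)

/-- The lowered tensor `(T_h)_{ijk} = (1/2)(h_{ij;k} + h_{ik;j} - h_{jk;i})`. -/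
def Tlow {n : ℕ} (g : Pt n → Fin n → Fin n → ℝ) (h : Pt n → Fin n → Fin n → ℝ)
    (x : Pt n) (i j k : Fin n) : ℝ :=
  (1/2) * (cd2 g h x i j k + cd2 g h x i k j - cd2 g h x j k i)
/-- Unit normal vector to the level set `{f = 0}` (normalized `g`-gradient of `f`). -/
def nuV {n : ℕ} (g : Pt n → Fin n → Fin n → ℝ) (f : Pt n → ℝ)
    (x : Pt n) (i : Fin n) : ℝ :=
  gradV g f x i / Real.sqrt (∑ j, ∑ k, ginv g x j k * pd j f x * pd k f x)

/-- Ambient second fundamental form of the level set `{f = 0}`: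
symmetrized covariant derivative of the lowered unit normal. -/
def sff {n : ℕ} (g : Pt n → Fin n → Fin n → ℝ) (f : Pt n → ℝ)
    (x : Pt n) (i j : Fin n) : ℝ :=
  (1/2) * (cdCov g (lowerV g (nuV g f)) x i j + cdCov g (lowerV g (nuV g f)) x j i)

/-- Mean curvature of the level set `{f = 0}` (divergence of the unit normal). -/
def hmean {n : ℕ} (g : Pt n → Fin n → Fin n → ℝ) (f : Pt n → ℝ) (x : Pt n) : ℝ :=
  ∑ i, ∑ j, ginv g x i j * cdCov g (lowerV g (nuV g f)) x i j

/-- The perturbed metric `g + s h`. -/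
def mpert {n : ℕ} (g h : Pt n → Fin n → Fin n → ℝ) (s : ℝ) :
    Pt n → Fin n → Fin n → ℝ :=
  fun y a b => g y a b + s * h y a b

/-- Linearized mean curvature `H'|_g(h)`. -/
def hmeanLin {n : ℕ} (g h : Pt n → Fin n → Fin n → ℝ) (f : Pt n → ℝ) (x : Pt n) : ℝ :=
  deriv (fun s : ℝ => hmean (mpert g h s) f x) 0

/-- Linearized second fundamental form `A'|_g(h)`. -/
def sffLin {n : ℕ} (g h : Pt n → Fin n → Fin n → ℝ) (f : Pt n → ℝ)
    (x : Pt n) (i j : Fin n) : ℝ :=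
  deriv (fun s : ℝ => sff (mpert g h s) f x i j) 0

/-- Linearized unit normal `ν'|_g(h)` (a vector field along the level set). -/
def nuLin {n : ℕ} (g h : Pt n → Fin n → Fin n → ℝ) (f : Pt n → ℝ)
    (x : Pt n) (i : Fin n) : ℝ :=
  deriv (fun s : ℝ => nuV (mpert g h s) f x i) 0

/-- Linearized Ricci curvature `Ric'|_g(h)`. -/
def ricLin {n : ℕ} (g h : Pt n → Fin n → Fin n → ℝ) (x : Pt n) (i j : Fin n) : ℝ :=
  deriv (fun s : ℝ => ric (mpert g h s) x i j) 0

/-- A vector `v` is tangent to the level set `{f = 0}` at `x`. -/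
def Tang {n : ℕ} (f : Pt n → ℝ) (x : Pt n) (v : Fin n → ℝ) : Prop :=
  fderiv ℝ f x v = 0

section PartOne
open scoped Topology

/-- pointwise action of a multilinear map on continuous maps -/
def nemMul {I E F : Type*} [TopologicalSpace I] [CompactSpace I]
    [NormedAddCommGroup E] [NormedSpace ℝ E] [NormedAddCommGroup F] [NormedSpace ℝ F]
    (k : ℕ) (q : ContinuousMultilinearMap ℝ (fun _ : Fin k => E) F) :
    ContinuousMultilinearMap ℝ (fun _ : Fin k => C(I, E)) C(I, F) :=
  MultilinearMap.mkContinuous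
    { toFun := fun c => ⟨fun s => q (fun i => c i s), by
        have : Continuous fun s => (fun i => c i s) := continuous_pi fun i => (c i).continuous
        exact q.cont.comp this⟩
      map_update_add' := by
        intro inst c i x y
        ext s
        have key : ∀ z : C(I, E), (fun j => (Function.update c i z) j s) =
            Function.update (fun j => c j s) i (z s) := by
          intro z; ext j
          by_cases h : j = i
          · subst h; simp
          · simp [h]
        simp [key]
      map_update_smul' := by
        intro inst c i a x
        ext s
        have key : ∀ z : C(I, E), (fun j => (Function.update c i z) j s) =
            Function.update (fun j => c j s) i (z s) := by
          intro z; ext j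
          by_cases h : j = i
          · subst h; simp
          · simp [h]
        simp [key] }
    ‖q‖ (by
      intro c
      rw [ContinuousMap.norm_le _ (by positivity)]
      intro s
      refine (q.le_opNorm _).trans ?_
      gcongr with i
      exact (c i).norm_coe_le_norm s)

lemma nemMul_apply {I E F : Type*} [TopologicalSpace I] [CompactSpace I]
    [NormedAddCommGroup E] [NormedSpace ℝ E] [NormedAddCommGroup F] [NormedSpace ℝ F]
    (k : ℕ) (q : ContinuousMultilinearMap ℝ (fun _ : Fin k => E) F) (c : Fin k → C(I, E)) (s : I) :
    nemMul k q c s = q (fun i => c i s) := rfl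

lemma nemMul_norm {I E F : Type*} [TopologicalSpace I] [CompactSpace I]
    [NormedAddCommGroup E] [NormedSpace ℝ E] [NormedAddCommGroup F] [NormedSpace ℝ F]
    (k : ℕ) (q : ContinuousMultilinearMap ℝ (fun _ : Fin k => E) F) :
    ‖nemMul (I := I) k q‖ ≤ ‖q‖ :=
  MultilinearMap.mkContinuous_norm_le _ (norm_nonneg _) _

lemma nemytskii {I E F : Type*} [TopologicalSpace I] [CompactSpace I]
    [NormedAddCommGroup E] [NormedSpace ℝ E] [NormedAddCommGroup F] [NormedSpace ℝ F]
    [CompleteSpace F] {V : E → F} {p : E} (hV : AnalyticAt ℝ V p) :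
    ∃ N : C(I, E) → C(I, F), AnalyticAt ℝ N (ContinuousMap.const I p) ∧
      ∀ᶠ c in 𝓝 (ContinuousMap.const I p), ∀ s, N c s = V (c s) := by
  obtain ⟨q, r, hq⟩ := hV
  let P : FormalMultilinearSeries ℝ C(I, E) C(I, F) := fun k => nemMul k (q k)
  have hrad : q.radius ≤ P.radius := by
    refine ENNReal.le_of_forall_nnreal_lt fun t ht => ?_
    obtain ⟨C, hC, hb⟩ := q.norm_mul_pow_le_of_lt_radius ht
    refine P.le_radius_of_bound C fun k => ?_
    refine le_trans ?_ (hb k)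
    gcongr
    exact nemMul_norm k (q k)
  have hpos : 0 < P.radius := lt_of_lt_of_le hq.r_pos (hq.r_le.trans hrad)
  have hP := P.hasFPowerSeriesOnBall hpos
  have hP' : HasFPowerSeriesOnBall (fun c => P.sum (c - ContinuousMap.const I p)) P
      (0 + ContinuousMap.const I p) P.radius := hP.comp_sub _
  rw [zero_add] at hP'
  refine ⟨_, hP'.analyticAt, ?_⟩
  filter_upwards [Metric.eball_mem_nhds (ContinuousMap.const I p) hq.r_pos] with c hc s
  have hmem : c - ContinuousMap.const I p ∈ Metric.eball (0 : C(I, E)) r := by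
    simpa [edist_eq_enorm_sub] using hc
  have h1 := hP.hasSum (Metric.eball_subset_eball (hq.r_le.trans hrad) hmem)
  rw [zero_add] at h1
  have h2 := h1.map (ContinuousMap.evalCLM ℝ s) (ContinuousMap.evalCLM ℝ s).continuous
  have hmem2 : c s - p ∈ Metric.eball (0 : E) r := by
    simp only [Metric.mem_eball, edist_zero_right] at hmem ⊢
    refine lt_of_le_of_lt ?_ hmem
    rw [← ofReal_norm, ← ofReal_norm]
    exact ENNReal.ofReal_le_ofReal ((c - ContinuousMap.const I p).norm_coe_le_norm s)
  have h3 := hq.hasSum hmem2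
  rw [add_sub_cancel] at h3
  exact h2.unique h3

abbrev II := Set.Icc (0:ℝ) 1

def ext01 {E : Type*} [TopologicalSpace E] (c : C(II, E)) : ℝ → E :=
  fun r => c (Set.projIcc 0 1 zero_le_one r)

lemma ext01_cont {E : Type*} [TopologicalSpace E] (c : C(II, E)) : Continuous (ext01 c) :=
  c.continuous.comp continuous_projIcc

lemma ext01_mem {E : Type*} [TopologicalSpace E] (c : C(II, E)) {r : ℝ} (hr : r ∈ Set.Icc (0:ℝ) 1) :
    ext01 c r = c ⟨r, hr⟩ := by
  unfold ext01; rw [Set.projIcc_of_mem zero_le_one hr]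

/-- the integral operator -/
def intL (E F : Type*) [NormedAddCommGroup E] [NormedSpace ℝ E] [NormedAddCommGroup F]
    [NormedSpace ℝ F] : C(II, E × F) →L[ℝ] C(II, E × F) :=
  LinearMap.mkContinuous
    { toFun := fun c => ⟨fun s => (-∫ r in (0:ℝ)..s, (ext01 c r).1, ∫ r in (s:ℝ)..1, (ext01 c r).2), by
        have h1 : Continuous fun r => (ext01 c r).1 := (ext01_cont c).fst
        have h2 : Continuous fun r => (ext01 c r).2 := (ext01_cont c).snd
        refine Continuous.prodMk ?_ ?_
        · exact ((intervalIntegral.continuous_primitive (μ := volume) (fun a b => h1.intervalIntegrable a b) 0).comp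
            continuous_subtype_val).neg
        · have : Continuous fun s : II => -∫ r in (1:ℝ)..s, (ext01 c r).2 := ((intervalIntegral.continuous_primitive (μ := volume) (fun a b => h2.intervalIntegrable a b) 1).comp
            continuous_subtype_val).neg
          refine this.congr fun s => ?_
          simp [intervalIntegral.integral_symm (s:ℝ) 1]⟩
      map_add' := by
        intro c d
        ext s
        · have h1 : Continuous fun r => (ext01 c r).1 := (ext01_cont c).fst
          have h2 : Continuous fun r => (ext01 d r).1 := (ext01_cont d).fst
          have := intervalIntegral.integral_add (h1.intervalIntegrable (μ := volume) 0 s) (h2.intervalIntegrable 0 s)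
          simp only [ContinuousMap.coe_mk, ContinuousMap.add_apply, Prod.mk_add_mk, ← neg_add]
          rw [← this]; rfl
        · have h1 : Continuous fun r => (ext01 c r).2 := (ext01_cont c).snd
          have h2 : Continuous fun r => (ext01 d r).2 := (ext01_cont d).snd
          have := intervalIntegral.integral_add (h1.intervalIntegrable (μ := volume) s 1) (h2.intervalIntegrable s 1)
          simp only [ContinuousMap.coe_mk, ContinuousMap.add_apply, Prod.mk_add_mk]
          rw [← this]; rfl
      map_smul' := by
        intro a c
        ext s
        · simp only [ContinuousMap.coe_mk, ContinuousMap.smul_apply, Prod.smul_mk, smul_neg, neg_inj, RingHom.id_apply]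
          rw [← intervalIntegral.integral_smul]; rfl
        · simp only [ContinuousMap.coe_mk, ContinuousMap.smul_apply, Prod.smul_mk, RingHom.id_apply]
          rw [← intervalIntegral.integral_smul]; rfl }
    1 (by
      intro c
      rw [one_mul, ContinuousMap.norm_le _ (norm_nonneg _)]
      rintro ⟨s, hs0, hs1⟩
      have hb : ∀ r, ‖ext01 c r‖ ≤ ‖c‖ := fun r => c.norm_coe_le_norm _
      refine max_le ?_ ?_
      · change ‖-∫ r in (0:ℝ)..s, (ext01 c r).1‖ ≤ ‖c‖
        rw [norm_neg]
        refine (intervalIntegral.norm_integral_le_of_norm_le_const (C := ‖c‖)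
          fun r _ => (norm_fst_le _).trans (hb r)).trans ?_
        rw [sub_zero, abs_of_nonneg hs0]
        exact mul_le_of_le_one_right (norm_nonneg _) hs1
      · refine (intervalIntegral.norm_integral_le_of_norm_le_const (C := ‖c‖)
          fun r _ => (norm_snd_le _).trans (hb r)).trans ?_
        rw [abs_of_nonneg (by simpa using hs1)]
        exact mul_le_of_le_one_right (norm_nonneg _) (by simpa using hs0))

lemma intL_fst {E F : Type*} [NormedAddCommGroup E] [NormedSpace ℝ E] [NormedAddCommGroup F]
    [NormedSpace ℝ F] (c : C(II, E × F)) (s : II) :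
    (intL E F c s).1 = -∫ r in (0:ℝ)..s, (ext01 c r).1 := rfl

lemma intL_snd {E F : Type*} [NormedAddCommGroup E] [NormedSpace ℝ E] [NormedAddCommGroup F]
    [NormedSpace ℝ F] (c : C(II, E × F)) (s : II) :
    (intL E F c s).2 = ∫ r in (s:ℝ)..1, (ext01 c r).2 := rfl

open scoped ContDiff in
lemma picard_data {E F : Type*} [NormedAddCommGroup E] [NormedSpace ℝ E] [CompleteSpace E]
    [NormedAddCommGroup F] [NormedSpace ℝ F] [CompleteSpace F]
    {f : E → ℝ} {V : E → E} {B : E × F → F} {p : E}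
    (hf : AnalyticAt ℝ f p) (hfp : f p = 0) (hV : AnalyticAt ℝ V p)
    (hB : AnalyticAt ℝ B (p, 0)) :
    ∃ ψ : E → C(II, E × F), AnalyticAt ℝ ψ p ∧ ψ p = ContinuousMap.const II (p, 0) ∧
      ∃ ε > 0, ∀ x ∈ Metric.ball p ε, ∀ c ∈ Metric.ball (ContinuousMap.const II (p, (0:F))) ε,
        ((∀ s ∈ Set.Icc (0:ℝ) 1,
          (ext01 c s).1 = x - f x • ∫ r in (0:ℝ)..s, V (ext01 c r).1 ∧
          (ext01 c s).2 = f x • ∫ r in s..1, B (ext01 c r)) ↔ ψ x = c) := by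
  have hVV : AnalyticAt ℝ (fun z : E × F => (V z.1, B z)) (p, 0) :=
    (hV.comp_of_eq analyticAt_fst rfl).prod hB
  obtain ⟨N, hNa, hN⟩ := nemytskii (I := II) hVV
  set c0 : C(II, E × F) := ContinuousMap.const II (p, (0:F)) with hc0
  let K : E →L[ℝ] C(II, E × F) :=
    (ContinuousLinearMap.const ℝ II).comp (ContinuousLinearMap.inl ℝ E F)
  have hK : ∀ x s, K x s = (x, 0) := fun x s => rfl
  let G : E × C(II, E × F) → C(II, E × F) := fun z => z.2 - K z.1 - f z.1 • intL E F (N z.2)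
  have hG : AnalyticAt ℝ G (p, c0) := by
    refine (analyticAt_snd.sub (K.analyticAt _ |>.comp_of_eq analyticAt_fst rfl)).sub ?_
    refine (hf.comp_of_eq analyticAt_fst rfl).smul ?_
    exact ((intL E F).analyticAt _).comp_of_eq (hNa.comp_of_eq analyticAt_snd rfl) rfl
  have hG0 : G (p, c0) = 0 := by
    simp only [G, hfp, zero_smul, sub_zero, sub_eq_zero]
    rfl
  have cdf : ContDiffAt ℝ ω G (p, c0) := hG.contDiffAt
  have hinv : fderiv ℝ G (p, c0) ∘L .inr ℝ E C(II, E × F) = ContinuousLinearMap.id ℝ _ := by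
    have h1 : HasFDerivAt (fun c : C(II, E × F) => G (p, c))
        (fderiv ℝ G (p, c0) ∘L .inr ℝ E C(II, E × F)) c0 :=
      hG.differentiableAt.hasFDerivAt.comp c0 (hasFDerivAt_prodMk_right p c0)
    have h2 : HasFDerivAt (fun c : C(II, E × F) => G (p, c)) (ContinuousLinearMap.id ℝ _) c0 := by
      have : (fun c : C(II, E × F) => G (p, c)) = fun c => c - K p := by
        ext1 c; simp [G, hfp]
      rw [this]
      exact (hasFDerivAt_id c0).sub_const _
    exact h1.unique h2
  have hinv' : (fderiv ℝ G (p, c0) ∘L .inr ℝ E C(II, E × F)).IsInvertible := by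
    rw [hinv]; exact ⟨ContinuousLinearEquiv.refl ℝ _, rfl⟩
  have hω : (ω : WithTop ℕ∞) ≠ 0 := by simp
  refine ⟨cdf.implicitFunction hω hinv', (cdf.contDiffAt_implicitFunction hω hinv').analyticAt,
    cdf.implicitFunction_apply_self hω hinv', ?_⟩
  have ev := cdf.eventually_apply_eq_iff_implicitFunction hω hinv'
  have hN' : ∀ᶠ z in 𝓝 (p, c0), ∀ s, N (z : E × C(II, E × F)).2 s = (V (z.2 s).1, B (z.2 s)) :=
    (continuous_snd.tendsto (p, c0)).eventually hN
  obtain ⟨ε, hε, hball⟩ := Metric.eventually_nhds_iff_ball.1 (ev.and hN')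
  refine ⟨ε, hε, fun x hx c hc => ?_⟩
  have hxc : ((x, c) : E × C(II, E × F)) ∈ Metric.ball (p, c0) ε := by
    rw [← ball_prod_same]; exact ⟨hx, hc⟩
  obtain ⟨h1, h2⟩ := hball _ hxc
  rw [← h1, hG0]
  have hNe : ∀ r, ext01 (N c) r = (V (ext01 c r).1, B (ext01 c r)) := fun r => h2 _
  have : G (x, c) = 0 ↔ ∀ s : II, c s = (x, 0) + f x • intL E F (N c) s := by
    rw [ContinuousMap.ext_iff]
    refine forall_congr' fun s => ?_
    simp only [G, ContinuousMap.sub_apply, ContinuousMap.smul_apply, hK, ContinuousMap.zero_apply]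
    rw [sub_sub, sub_eq_zero]
  rw [this]
  have key : ∀ s (hs : s ∈ Set.Icc (0:ℝ) 1),
      (c ⟨s, hs⟩ = (x, 0) + f x • intL E F (N c) ⟨s, hs⟩) ↔
      ((ext01 c s).1 = x - f x • ∫ r in (0:ℝ)..s, V (ext01 c r).1 ∧
          (ext01 c s).2 = f x • ∫ r in s..1, B (ext01 c r)) := by
    intro s hs
    rw [ext01_mem c hs, Prod.ext_iff]
    simp only [Prod.fst_add, Prod.smul_fst, Prod.snd_add, Prod.smul_snd, intL_fst, intL_snd, hNe]
    simp [sub_eq_add_neg]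
  constructor
  · intro h s; exact (key s s.2).2 (h s s.2)
  · intro h s hs; exact (key s hs).1 (h ⟨s, hs⟩)

lemma reparam {Z G : Type*} [NormedAddCommGroup G] [NormedSpace ℝ G] {y w : ℝ → Z} {σ : ℝ}
    (hw : ∀ s ∈ Set.Icc (0:ℝ) 1, w s = y (σ + (1 - σ) * s)) (Q : Z → G) (t a b : ℝ)
    (ha : a ∈ Set.Icc (0:ℝ) 1) (hb : b ∈ Set.Icc (0:ℝ) 1) :
    ((1 - σ) * t) • ∫ r in a..b, Q (w r) =
      t • ∫ r in (σ + (1 - σ) * a)..(σ + (1 - σ) * b), Q (y r) := by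
  have e1 : ∫ r in a..b, Q (w r) = ∫ r in a..b, Q (y (σ + (1 - σ) * r)) := by
    refine intervalIntegral.integral_congr fun r hr => ?_
    have : r ∈ Set.Icc (0:ℝ) 1 := Set.uIcc_subset_Icc ha hb hr
    simp only [hw r this]
  rw [e1, mul_comm, mul_smul]
  rw [intervalIntegral.smul_integral_comp_add_mul (fun r => Q (y r)) (1 - σ) σ]

lemma traj {E : Type*} [NormedAddCommGroup E] [NormedSpace ℝ E] [CompleteSpace E]
    {f : E → ℝ} {V : E → E} {p : E} {R : ℝ}
    (hR : ∀ x ∈ Metric.ball p R, DifferentiableAt ℝ f x ∧ ContinuousAt V x ∧ fderiv ℝ f x (V x) = 1)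
    {x : E} {y : ℝ → E} (hyc : Continuous y) (hyb : ∀ r, y r ∈ Metric.ball p R)
    (hy : ∀ s ∈ Set.Icc (0:ℝ) 1, y s = x - f x • ∫ r in (0:ℝ)..s, V (y r)) :
    (∀ s ∈ Set.Icc (0:ℝ) 1, f (y s) = (1 - s) * f x) ∧
    ∃ γ : ℝ → E, (∀ s, HasDerivAt γ (-(f x • V (y s))) s) ∧ ∀ s ∈ Set.Icc (0:ℝ) 1, γ s = y s := by
  have hVc : Continuous fun r => V (y r) := by
    rw [continuous_iff_continuousAt]
    intro r
    exact ((hR _ (hyb r)).2.1).comp hyc.continuousAt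
  let γ : ℝ → E := fun s => x - f x • ∫ r in (0:ℝ)..s, V (y r)
  have hγ : ∀ s, HasDerivAt γ (-(f x • V (y s))) s := by
    intro s
    have h1 : HasDerivAt (fun s => ∫ r in (0:ℝ)..s, V (y r)) (V (y s)) s :=
      intervalIntegral.integral_hasDerivAt_right (hVc.intervalIntegrable _ _)
        (hVc.stronglyMeasurableAtFilter _ _) hVc.continuousAt
    simpa using (h1.const_smul (f x)).const_sub x
  have hγy : ∀ s ∈ Set.Icc (0:ℝ) 1, γ s = y s := fun s hs => (hy s hs).symm
  refine ⟨?_, γ, hγ, hγy⟩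
  have hd : ∀ s ∈ Set.Icc (0:ℝ) 1, HasDerivAt (fun s => f (γ s) - (1 - s) * f x) 0 s := by
    intro s hs
    have hb := hR _ (hyb s)
    have h1 : HasFDerivAt f (fderiv ℝ f (y s)) (γ s) := by
      rw [hγy s hs]; exact hb.1.hasFDerivAt
    have h2 := h1.comp_hasDerivAt s (hγ s)
    have h3 : HasDerivAt (fun s : ℝ => (1 - s) * f x) (-1 * f x) s :=
      ((hasDerivAt_id s).const_sub 1).mul_const _
    have h4 := h2.sub h3
    have h5 : (fderiv ℝ f (y s)) (-(f x • V (y s))) - -1 * f x = 0 := by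
      rw [map_neg, map_smul, hb.2.2, smul_eq_mul]; ring
    rw [h5] at h4
    exact h4
  intro s hs
  have h0 : f (γ 0) - (1 - 0) * f x = 0 := by simp [γ]
  have := constant_of_has_deriv_right_zero (a := (0:ℝ)) (b := 1)
    (f := fun s => f (γ s) - (1 - s) * f x)
    (fun s hs => (hd s hs).continuousAt.continuousWithinAt)
    (fun s hs => (hd s ⟨hs.1, hs.2.le⟩).hasDerivWithinAt) s hs
  rw [h0, hγy s hs] at this
  linarith

theorem local_transport {E F : Type*} [NormedAddCommGroup E] [NormedSpace ℝ E] [CompleteSpace E]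
    [NormedAddCommGroup F] [NormedSpace ℝ F] [CompleteSpace F]
    {f : E → ℝ} {V : E → E} {B : E × F → F} {p : E}
    (hf : AnalyticAt ℝ f p) (hfp : f p = 0) (hV : AnalyticAt ℝ V p)
    (hB : AnalyticAt ℝ B (p, 0)) (hfV : ∀ᶠ x in 𝓝 p, fderiv ℝ f x (V x) = 1) :
    ∃ u : E → F, AnalyticAt ℝ u p ∧ (∀ᶠ x in 𝓝 p, fderiv ℝ u x (V x) = B (x, u x)) ∧
      (∀ᶠ x in 𝓝 p, f x = 0 → u x = 0) ∧
      ∀ v : E → F, AnalyticAt ℝ v p → (∀ᶠ x in 𝓝 p, fderiv ℝ v x (V x) = B (x, v x)) →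
        (∀ᶠ x in 𝓝 p, f x = 0 → v x = 0) → v =ᶠ[𝓝 p] u := by
  obtain ⟨ψ, hψ, hψp, ε, hε, hiff⟩ := picard_data hf hfp hV hB
  set c0 : C(II, E × F) := ContinuousMap.const II (p, (0:F)) with hc0
  have ev1 : ∀ᶠ x in 𝓝 p, DifferentiableAt ℝ f x ∧ ContinuousAt V x ∧ fderiv ℝ f x (V x) = 1 := by
    filter_upwards [hf.eventually_analyticAt, hV.eventually_analyticAt, hfV] with x h1 h2 h3
    exact ⟨h1.differentiableAt, h2.continuousAt, h3⟩
  have ev2 : ∀ᶠ z in 𝓝 (p, (0:F)), ContinuousAt B z :=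
    hB.eventually_analyticAt.mono fun z hz => hz.continuousAt
  obtain ⟨R1, hR1, hR1b⟩ := Metric.eventually_nhds_iff_ball.1 ev1
  obtain ⟨R2, hR2, hR2b⟩ := Metric.eventually_nhds_iff_ball.1 ev2
  obtain ⟨R, hR, hRε, hRR1, hRR2⟩ : ∃ R > 0, R ≤ ε ∧ R ≤ R1 ∧ R ≤ R2 :=
    ⟨min ε (min R1 R2), by positivity, min_le_left _ _, (min_le_right _ _).trans (min_le_left _ _),
      (min_le_right _ _).trans (min_le_right _ _)⟩
  have hRb : ∀ x ∈ Metric.ball p R,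
      DifferentiableAt ℝ f x ∧ ContinuousAt V x ∧ fderiv ℝ f x (V x) = 1 :=
    fun x hx => hR1b x (Metric.ball_subset_ball hRR1 hx)
  have hBb : ∀ z ∈ Metric.ball (p, (0:F)) R, ContinuousAt B z :=
    fun x hx => hR2b x (Metric.ball_subset_ball hRR2 hx)
  have hext : ∀ {ρ : ℝ} {c : C(II, E × F)}, c ∈ Metric.ball c0 ρ →
      ∀ r, ext01 c r ∈ Metric.ball (p, (0:F)) ρ := by
    intro ρ c hc r
    exact lt_of_le_of_lt (ContinuousMap.dist_apply_le_dist (f := c) (g := c0) _) hc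
  have hfst : ∀ {ρ : ℝ} {z : E × F}, z ∈ Metric.ball (p, (0:F)) ρ → z.1 ∈ Metric.ball p ρ := by
    intro ρ z hz
    rw [← ball_prod_same] at hz; exact hz.1
  -- good points
  have evψ : ∀ ρ > 0, ∀ᶠ x in 𝓝 p, x ∈ Metric.ball p ρ ∧ ψ x ∈ Metric.ball c0 ρ := by
    intro ρ hρ
    have h1 := hψ.continuousAt.tendsto.eventually (Metric.ball_mem_nhds (ψ p) hρ)
    rw [hψp] at h1
    exact (Filter.Eventually.and (Metric.ball_mem_nhds p hρ) h1)
  have sol : ∀ x, x ∈ Metric.ball p R → ψ x ∈ Metric.ball c0 R → ∀ s ∈ Set.Icc (0:ℝ) 1,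
          (ext01 (ψ x) s).1 = x - f x • ∫ r in (0:ℝ)..s, V (ext01 (ψ x) r).1 ∧
          (ext01 (ψ x) s).2 = f x • ∫ r in s..1, B (ext01 (ψ x) r) := by
    intro x hx hψx
    exact (hiff x (Metric.ball_subset_ball hRε hx) _ (Metric.ball_subset_ball hRε hψx)).2 rfl
  have hBc : ∀ c ∈ Metric.ball c0 R, Continuous fun r => B (ext01 c r) := by
    intro c hc
    rw [continuous_iff_continuousAt]
    intro r
    exact (hBb _ (hext hc r)).comp (ext01_cont c).continuousAt
  let u : E → F := fun x => (ext01 (ψ x) 0).2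
  have hu : AnalyticAt ℝ u p := by
    have h1 : AnalyticAt ℝ (fun x => ((ContinuousLinearMap.snd ℝ E F).comp
      (ContinuousMap.evalCLM ℝ (Set.projIcc (0:ℝ) 1 zero_le_one 0))) (ψ x)) p :=
      (ContinuousLinearMap.analyticAt _ _).comp hψ
    exact h1
  have h01 : (0:ℝ) ∈ Set.Icc (0:ℝ) 1 := ⟨le_rfl, zero_le_one⟩
  have h11 : (1:ℝ) ∈ Set.Icc (0:ℝ) 1 := ⟨zero_le_one, le_rfl⟩
  -- consistency along trajectories
  have cons : ∀ x, x ∈ Metric.ball p R → ψ x ∈ Metric.ball c0 R → ∀ σ ∈ Set.Icc (0:ℝ) 1,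
      u (ext01 (ψ x) σ).1 = (ext01 (ψ x) σ).2 := by
    intro x hx hψx σ hσ
    have hs := sol x hx hψx
    set y := ext01 (ψ x) with hy
    have hyc : Continuous y := ext01_cont _
    have hyb := hext hψx
    obtain ⟨hfy, -⟩ := traj (x := x) hRb (y := fun r => (y r).1) hyc.fst (fun r => hfst (hyb r))
      (fun s h => (hs s h).1)
    have hmem : ∀ s ∈ Set.Icc (0:ℝ) 1, σ + (1 - σ) * s ∈ Set.Icc (0:ℝ) 1 := by
      intro s h
      constructor
      · have := mul_nonneg (sub_nonneg.2 hσ.2) h.1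
        linarith [hσ.1]
      · nlinarith [hσ.2, h.2]
    let c' : C(II, E × F) := ⟨fun s => y (σ + (1 - σ) * s), by fun_prop⟩
    have hc' : ∀ s ∈ Set.Icc (0:ℝ) 1, ext01 c' s = y (σ + (1 - σ) * s) := by
      intro s h
      rw [ext01_mem c' h]; rfl
    have hc'b : c' ∈ Metric.ball c0 R := by
      rw [Metric.mem_ball, ContinuousMap.dist_lt_iff hR]
      intro s; exact hyb _
    have hVc : Continuous fun r => V (y r).1 := by
      rw [continuous_iff_continuousAt]
      intro r
      exact ((hRb _ (hfst (hyb r))).2.1).comp (f := fun r => (y r).1) hyc.fst.continuousAt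
    have hBy : Continuous fun r => B (y r) := hBc _ hψx
    have := (hiff (y σ).1 (Metric.ball_subset_ball hRε (hfst (hyb σ))) c'
      (Metric.ball_subset_ball hRε hc'b)).1 (by
        intro s h
        rw [hc' s h]
        refine ⟨?_, ?_⟩
        · have e := reparam (σ := σ) hc' (fun z => V z.1) (f x) 0 s h01 h
          rw [mul_zero, add_zero] at e
          rw [hfy σ hσ, e, (hs _ (hmem s h)).1, (hs σ hσ).1, sub_sub, ← smul_add]
          rw [intervalIntegral.integral_add_adjacent_intervals] 
          · simpa using hVc.intervalIntegrable _ _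
          · simpa using hVc.intervalIntegrable _ _
        · have e := reparam (σ := σ) hc' B (f x) s 1 h h11
          rw [hfy σ hσ, e, (hs _ (hmem s h)).2]
          simp)
    change (ext01 (ψ (y σ).1) 0).2 = _
    rw [this, hc' 0 h01]
    simp
  have hψ0 : ∀ x, x ∈ Metric.ball p R → ψ x ∈ Metric.ball c0 R → (ext01 (ψ x) 0).1 = x := by
    intro x hx hψx
    have := (sol x hx hψx 0 h01).1
    simpa using this
  refine ⟨u, hu, ?_, ?_, ?_⟩
  · -- the equation
    have evne : ∀ᶠ x in 𝓝 p, f x ≠ 0 → fderiv ℝ u x (V x) = B (x, u x) := by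
      filter_upwards [evψ R hR, hu.eventually_analyticAt] with x ⟨hx, hψx⟩ hux hfx
      have hs := sol x hx hψx
      have hcons := cons x hx hψx
      have hx0 := hψ0 x hx hψx
      have hBy : Continuous fun r => B (ext01 (ψ x) r) := hBc _ hψx
      have hz0 : ext01 (ψ x) 0 = (x, u x) := Prod.ext hx0 rfl
      have hyb := hext hψx
      obtain ⟨-, γ, hγ, hγy⟩ := traj (x := x) hRb (y := fun r => (ext01 (ψ x) r).1)
        (ext01_cont _).fst (fun r => hfst (hyb r)) (fun s h => (hs s h).1)
      have hγ0 : γ 0 = x := by rw [hγy 0 h01]; exact hx0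
      have hd1 : HasDerivAt (fun s => u (γ s)) (fderiv ℝ u x (-(f x • V x))) 0 := by
        have h1 : HasFDerivAt u (fderiv ℝ u x) (γ 0) := by
          rw [hγ0]; exact hux.differentiableAt.hasFDerivAt
        have h2 := h1.comp_hasDerivAt 0 (hγ 0)
        simp only [hz0] at h2
        exact h2
      have hd2 : HasDerivAt (fun s => f x • ∫ r in s..1, B (ext01 (ψ x) r))
          (f x • -(B (x, u x))) 0 := by
        have h1 := intervalIntegral.integral_hasDerivAt_left (hBy.intervalIntegrable 0 1)
          (hBy.stronglyMeasurableAtFilter _ _) hBy.continuousAt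
        simp only [hz0] at h1
        exact h1.const_smul (f x)
      have heq : ∀ s ∈ Set.Icc (0:ℝ) 1, u (γ s) = f x • ∫ r in s..1, B (ext01 (ψ x) r) := by
        intro s h
        rw [hγy s h, hcons s h, (hs s h).2]
      have hd3 : HasDerivWithinAt (fun s => u (γ s)) (f x • -(B (x, u x))) (Set.Icc 0 1) 0 :=
        hd2.hasDerivWithinAt.congr heq (heq 0 h01)
      have := (uniqueDiffOn_Icc (zero_lt_one (α := ℝ)) 0 h01).eq_deriv _ hd1.hasDerivWithinAt hd3
      rw [map_neg, map_smul, smul_neg, neg_inj] at this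
      exact smul_right_injective F hfx this
    have hcont : ∀ᶠ x in 𝓝 p, ContinuousAt (fun x => fderiv ℝ u x (V x) - B (x, u x)) x := by
      have hup : u p = 0 := by
        show (ext01 (ψ p) 0).2 = 0
        rw [hψp]; rfl
      have h1 : AnalyticAt ℝ (fun x => B (x, u x)) p :=
        hB.comp_of_eq (analyticAt_id.prod hu) (by simp [hup])
      filter_upwards [h1.eventually_analyticAt, hu.fderiv.eventually_analyticAt,
        hV.eventually_analyticAt] with x a b c
      exact (b.continuousAt.clm_apply c.continuousAt).sub a.continuousAt
    filter_upwards [evne.eventually_nhds, hcont, hfV] with x hx hc hv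
    by_contra hne
    have h1 : ∀ᶠ z in 𝓝 x, fderiv ℝ u z (V z) - B (z, u z) ≠ 0 :=
      hc.eventually_ne (sub_ne_zero.2 hne)
    have h2 : f =ᶠ[𝓝 x] fun _ => 0 := by
      filter_upwards [h1, hx] with z a b
      by_contra hfz
      exact a (sub_eq_zero.2 (b hfz))
    rw [h2.fderiv_eq] at hv
    simp at hv
  · filter_upwards [evψ R hR] with x ⟨hx, hψx⟩ hfx
    have := (sol x hx hψx 0 h01).2
    rw [hfx, zero_smul] at this
    exact this
  · intro v hv hvV hv0
    have hvp : v p = 0 := hv0.self_of_nhds hfp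
    have hvpair : ∀ᶠ x in 𝓝 p, (x, v x) ∈ Metric.ball (p, (0:F)) R := by
      have h1 : ContinuousAt (fun x => (x, v x)) p := continuousAt_id.prodMk hv.continuousAt
      have h2 := h1.tendsto
      simp only [hvp] at h2
      exact h2.eventually (Metric.ball_mem_nhds _ hR)
    obtain ⟨ρ', hρ', hρ'b⟩ := Metric.eventually_nhds_iff_ball.1
      ((hv.eventually_analyticAt.and hvV).and (hv0.and hvpair))
    obtain ⟨ρ, hρ, hρR, hρρ⟩ : ∃ ρ > 0, ρ ≤ R ∧ ρ ≤ ρ' :=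
      ⟨min R ρ', by positivity, min_le_left _ _, min_le_right _ _⟩
    filter_upwards [evψ ρ hρ] with x ⟨hx', hψx'⟩
    have hx := Metric.ball_subset_ball hρR hx'
    have hψx := Metric.ball_subset_ball hρR hψx'
    have hs := sol x hx hψx
    have hx0 := hψ0 x hx hψx
    have hyb := hext hψx
    have hyb' := hext hψx'
    have hyc : Continuous fun r => (ext01 (ψ x) r).1 := (ext01_cont _).fst
    obtain ⟨hfy, γ, hγ, hγy⟩ := traj (x := x) hRb (y := fun r => (ext01 (ψ x) r).1)
        hyc (fun r => hfst (hyb r)) (fun s h => (hs s h).1)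
    set y : ℝ → E := fun r => (ext01 (ψ x) r).1 with hy
    have hyρ : ∀ r, y r ∈ Metric.ball p ρ' := fun r =>
      Metric.ball_subset_ball hρρ (hfst (hyb' r))
    have hvy : Continuous fun r => v (y r) := by
      rw [continuous_iff_continuousAt]
      intro r
      exact (hρ'b _ (hyρ r)).1.1.continuousAt.comp hyc.continuousAt
    let c' : C(II, E × F) := ⟨fun s => (y s, v (y s)),
      (hyc.prodMk hvy).comp continuous_subtype_val⟩
    have hc' : ∀ s ∈ Set.Icc (0:ℝ) 1, ext01 c' s = (y s, v (y s)) := by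
      intro s h
      rw [ext01_mem c' h]; rfl
    have hc'b : c' ∈ Metric.ball c0 R := by
      rw [Metric.mem_ball, ContinuousMap.dist_lt_iff hR]
      intro s; exact (hρ'b _ (hyρ s)).2.2
    have hBv : Continuous fun r => B (y r, v (y r)) := by
      rw [continuous_iff_continuousAt]
      intro r
      exact (hBb _ (hρ'b _ (hyρ r)).2.2).comp (f := fun r => (y r, v (y r)))
        (hyc.prodMk hvy).continuousAt
    have := (hiff x (Metric.ball_subset_ball hRε hx) c' (Metric.ball_subset_ball hRε hc'b)).1 (by
      intro s h
      rw [hc' s h]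
      have e1 : ∫ r in (0:ℝ)..s, V (ext01 c' r).1 = ∫ r in (0:ℝ)..s, V (y r) := by
        refine intervalIntegral.integral_congr fun r hr => ?_
        simp only [hc' r (Set.uIcc_subset_Icc h01 h hr)]
      have e2 : ∫ r in s..1, B (ext01 c' r) = ∫ r in s..1, B (y r, v (y r)) := by
        refine intervalIntegral.integral_congr fun r hr => ?_
        simp only [hc' r (Set.uIcc_subset_Icc h h11 hr)]
      rw [e1, e2]
      refine ⟨(hs s h).1, ?_⟩
      have hder : ∀ r ∈ Set.uIcc s 1, HasDerivAt (fun r => v (γ r)) (-(f x • B (y r, v (y r)))) r := by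
        intro r hr
        have hr' := Set.uIcc_subset_Icc h h11 hr
        have hq := (hρ'b _ (hyρ r)).1
        have h1 : HasFDerivAt v (fderiv ℝ v (y r)) (γ r) := by
          rw [hγy r hr']; exact hq.1.differentiableAt.hasFDerivAt
        have h2 := h1.comp_hasDerivAt r (hγ r)
        rw [map_neg, map_smul, hq.2] at h2
        exact h2
      have hftc := intervalIntegral.integral_eq_sub_of_hasDerivAt hder
        ((hBv.const_smul (f x)).neg.intervalIntegrable _ _)
      rw [intervalIntegral.integral_neg, intervalIntegral.integral_smul, hγy s h, hγy 1 h11] at hftc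
      have hv1 : v (y 1) = 0 := by
        refine (hρ'b _ (hyρ 1)).2.1 ?_
        have := hfy 1 h11
        simpa using this
      rw [hv1, zero_sub, neg_inj] at hftc
      exact hftc.symm)
    change v x = (ext01 (ψ x) 0).2
    rw [this, hc' 0 h01]
    have : y 0 = x := hx0
    simp [this]

theorem local_transport2 {E F : Type*} [NormedAddCommGroup E] [NormedSpace ℝ E] [CompleteSpace E]
    [NormedAddCommGroup F] [NormedSpace ℝ F] [CompleteSpace F]
    {f : E → ℝ} {V : E → E} {B : E × F → F} {p : E}
    (hf : AnalyticAt ℝ f p) (hfp : f p = 0) (hV : AnalyticAt ℝ V p)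
    (hB : AnalyticAt ℝ B (p, 0)) (hfV : fderiv ℝ f p (V p) ≠ 0) :
    ∃ u : E → F, AnalyticAt ℝ u p ∧ (∀ᶠ x in 𝓝 p, fderiv ℝ u x (V x) = B (x, u x)) ∧
      (∀ᶠ x in 𝓝 p, f x = 0 → u x = 0) ∧
      ∀ v : E → F, AnalyticAt ℝ v p → (∀ᶠ x in 𝓝 p, fderiv ℝ v x (V x) = B (x, v x)) →
        (∀ᶠ x in 𝓝 p, f x = 0 → v x = 0) → v =ᶠ[𝓝 p] u := by
  have hD : AnalyticAt ℝ (fun x => fderiv ℝ f x (V x)) p :=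
    (hf.fderiv.contDiffAt.clm_apply hV.contDiffAt).analyticAt
  have hDi : AnalyticAt ℝ (fun x => (fderiv ℝ f x (V x))⁻¹) p := hD.inv hfV
  have hne : ∀ᶠ x in 𝓝 p, fderiv ℝ f x (V x) ≠ 0 := hD.continuousAt.eventually_ne hfV
  have hV' : AnalyticAt ℝ (fun x => (fderiv ℝ f x (V x))⁻¹ • V x) p := hDi.smul hV
  have hB' : AnalyticAt ℝ (fun z : E × F => (fderiv ℝ f z.1 (V z.1))⁻¹ • B z) (p, 0) :=
    (hDi.comp_of_eq (f := Prod.fst) (x := (p, (0:F))) analyticAt_fst rfl).smul hB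
  have key : ∀ v : E → F, (∀ᶠ x in 𝓝 p, fderiv ℝ v x ((fderiv ℝ f x (V x))⁻¹ • V x) =
      (fderiv ℝ f x (V x))⁻¹ • B (x, v x)) ↔ (∀ᶠ x in 𝓝 p, fderiv ℝ v x (V x) = B (x, v x)) := by
    intro v
    refine Filter.eventually_congr ?_
    filter_upwards [hne] with x hx
    rw [map_smul]
    exact (smul_right_injective F (inv_ne_zero hx)).eq_iff
  obtain ⟨u, h1, h2, h3, h4⟩ := local_transport hf hfp hV' hB' (by
    filter_upwards [hne] with x hx
    rw [map_smul, smul_eq_mul, inv_mul_cancel₀ hx])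
  exact ⟨u, h1, (key u).1 h2, h3, fun v a b c => h4 v a ((key v).2 b) c⟩

theorem global_transport {E F : Type*} [NormedAddCommGroup E] [NormedSpace ℝ E] [CompleteSpace E]
    [NormedAddCommGroup F] [NormedSpace ℝ F] [CompleteSpace F]
    {f : E → ℝ} {V : E → E} {B : E × F → F} {W₁ : Set E} (hW₁ : IsOpen W₁)
    (hS : f ⁻¹' {(0:ℝ)} ⊆ W₁)
    (hf : AnalyticOnNhd ℝ f W₁) (hV : AnalyticOnNhd ℝ V W₁)
    (hB : ∀ x ∈ W₁, ∀ z, AnalyticAt ℝ B (x, z))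
    (hfV : ∀ x ∈ f ⁻¹' {(0:ℝ)}, fderiv ℝ f x (V x) ≠ 0) :
    ∃ W : Set E, IsOpen W ∧ f ⁻¹' {(0:ℝ)} ⊆ W ∧ W ⊆ W₁ ∧ ∃ u : E → F, AnalyticOnNhd ℝ u W ∧
      (∀ x ∈ f ⁻¹' {(0:ℝ)}, u x = 0) ∧ ∀ x ∈ W, fderiv ℝ u x (V x) = B (x, u x) := by
  have loc : ∀ p : E, ∃ (u : E → F) (r : ℝ), p ∈ f ⁻¹' {(0:ℝ)} → 0 < r ∧
      (∀ x ∈ Metric.ball p (4 * r), x ∈ W₁ ∧ AnalyticAt ℝ u x ∧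
        fderiv ℝ u x (V x) = B (x, u x) ∧ (f x = 0 → u x = 0)) ∧
      ∀ v : E → F, AnalyticAt ℝ v p → (∀ᶠ x in 𝓝 p, fderiv ℝ v x (V x) = B (x, v x)) →
        (∀ᶠ x in 𝓝 p, f x = 0 → v x = 0) → v =ᶠ[𝓝 p] u := by
    intro p
    by_cases hp : p ∈ f ⁻¹' {(0:ℝ)}
    · have hpW := hS hp
      obtain ⟨u, h1, h2, h3, h4⟩ := local_transport2 (hf p hpW) hp (hV p hpW) (hB p hpW 0) (hfV p hp)
      obtain ⟨ε, hε, hb⟩ := Metric.eventually_nhds_iff_ball.1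
        (Filter.Eventually.and (hW₁.mem_nhds hpW) (h1.eventually_analyticAt.and (h2.and h3)))
      refine ⟨u, ε / 4, fun _ => ⟨by positivity, fun x hx => ?_, h4⟩⟩
      rw [mul_div_cancel₀ ε (by norm_num : (4:ℝ) ≠ 0)] at hx
      exact hb x hx
    · exact ⟨0, 0, fun h => absurd h hp⟩
  choose U r hU using loc
  have agree0 : ∀ p ∈ f ⁻¹' {(0:ℝ)}, ∀ q ∈ f ⁻¹' {(0:ℝ)}, r q ≤ r p → ∀ x ∈ Metric.ball p (r p),
      x ∈ Metric.ball q (r q) → U p x = U q x := by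
    intro p hp q hq hpq x hxp hxq
    obtain ⟨hrp, hbp, -⟩ := hU p hp
    obtain ⟨hrq, hbq, huq⟩ := hU q hq
    have sub1 : Metric.ball q (r q) ⊆ Metric.ball p (4 * r p) := by
      intro z hz
      rw [Metric.mem_ball] at *
      have := dist_triangle4 z q x p
      rw [dist_comm q x] at this
      linarith
    have sub2 : Metric.ball q (r q) ⊆ Metric.ball q (4 * r q) :=
      Metric.ball_subset_ball (by linarith)
    have hqn : Metric.ball q (r q) ∈ 𝓝 q := Metric.ball_mem_nhds q hrq
    have hqq : q ∈ Metric.ball q (r q) := Metric.mem_ball_self hrq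
    have e : U p =ᶠ[𝓝 q] U q := by
      refine huq _ (hbp q (sub1 hqq)).2.1 ?_ ?_
      · filter_upwards [hqn] with z hz using (hbp z (sub1 hz)).2.2.1
      · filter_upwards [hqn] with z hz using (hbp z (sub1 hz)).2.2.2
    exact AnalyticOnNhd.eqOn_of_preconnected_of_eventuallyEq
      (fun z hz => (hbp z (sub1 hz)).2.1) (fun z hz => (hbq z (sub2 hz)).2.1)
      (convex_ball q (r q)).isPreconnected hqq e hxq
  have agree : ∀ p ∈ f ⁻¹' {(0:ℝ)}, ∀ q ∈ f ⁻¹' {(0:ℝ)}, ∀ x ∈ Metric.ball p (r p),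
      x ∈ Metric.ball q (r q) → U p x = U q x := by
    intro p hp q hq x hxp hxq
    rcases le_total (r q) (r p) with h | h
    · exact agree0 p hp q hq h x hxp hxq
    · exact (agree0 q hq p hp h x hxq hxp).symm
  classical
  let u : E → F := fun x =>
    if h : ∃ p, p ∈ f ⁻¹' {(0:ℝ)} ∧ x ∈ Metric.ball p (r p) then U h.choose x else 0
  have hu : ∀ p ∈ f ⁻¹' {(0:ℝ)}, ∀ x ∈ Metric.ball p (r p), u x = U p x := by
    intro p hp x hx
    have h : ∃ p, p ∈ f ⁻¹' {(0:ℝ)} ∧ x ∈ Metric.ball p (r p) := ⟨p, hp, hx⟩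
    simp only [u, dif_pos h]
    exact agree _ h.choose_spec.1 _ hp _ h.choose_spec.2 hx
  have hu' : ∀ p ∈ f ⁻¹' {(0:ℝ)}, ∀ x ∈ Metric.ball p (r p), U p =ᶠ[𝓝 x] u := by
    intro p hp x hx
    filter_upwards [Metric.isOpen_ball.mem_nhds hx] with z hz using (hu p hp z hz).symm
  have sub : ∀ p ∈ f ⁻¹' {(0:ℝ)}, Metric.ball p (r p) ⊆ Metric.ball p (4 * r p) := by
    intro p hp
    exact Metric.ball_subset_ball (by linarith [(hU p hp).1])
  refine ⟨⋃ p ∈ f ⁻¹' {(0:ℝ)}, Metric.ball p (r p), ?_, ?_, ?_, u, ?_, ?_, ?_⟩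
  · exact isOpen_biUnion fun p _ => Metric.isOpen_ball
  · intro p hp
    exact Set.mem_biUnion hp (Metric.mem_ball_self (hU p hp).1)
  · intro x hx
    obtain ⟨p, hp, hx⟩ := Set.mem_iUnion₂.1 hx
    exact ((hU p hp).2.1 x (sub p hp hx)).1
  · intro x hx
    obtain ⟨p, hp, hx⟩ := Set.mem_iUnion₂.1 hx
    exact ((hU p hp).2.1 x (sub p hp hx)).2.1.congr (hu' p hp x hx)
  · intro p hp
    have hpp := Metric.mem_ball_self (x := p) (hU p hp).1
    rw [hu p hp p hpp]
    exact ((hU p hp).2.1 p (sub p hp hpp)).2.2.2 hp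
  · intro x hx
    obtain ⟨p, hp, hx⟩ := Set.mem_iUnion₂.1 hx
    rw [← (hu' p hp x hx).fderiv_eq, hu p hp x hx]
    exact ((hU p hp).2.1 x (sub p hp hx)).2.2.1

theorem transport_zero {E : Type*} [NormedAddCommGroup E] [NormedSpace ℝ E] [CompleteSpace E]
    {f : E → ℝ} {V : E → E} {z : E → ℝ} {p : E}
    (hf : AnalyticAt ℝ f p) (hfp : f p = 0) (hV : AnalyticAt ℝ V p)
    (hfV : fderiv ℝ f p (V p) ≠ 0) (hz : AnalyticAt ℝ z p)
    (hzV : ∀ᶠ x in 𝓝 p, fderiv ℝ z x (V x) = 0) (hz0 : ∀ᶠ x in 𝓝 p, f x = 0 → z x = 0) :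
    ∀ᶠ x in 𝓝 p, z x = 0 := by
  obtain ⟨u, -, -, -, h4⟩ := local_transport2 (B := fun _ : E × ℝ => (0:ℝ)) hf hfp hV
    analyticAt_const hfV
  have h1 := h4 z hz hzV hz0
  have h2 := h4 (fun _ => 0) analyticAt_const (by simp) (by simp)
  filter_upwards [h1, h2] with x a b
  rw [a, ← b]

lemma algA1 {n : ℕ} (ν ξ du : Fin n → ℝ) (D N h : Fin n → Fin n → ℝ) (Γ : Fin n → Fin n → Fin n → ℝ)
    (ode : ∀ i, ∑ j, ν j * D i j = ∑ j, h i j * ν j - du i + ∑ j, ξ j * N j i +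
      ∑ j, ∑ k, (Γ k i j + Γ k j i) * ξ k * ν j)
    (par : ∀ i, ∑ j, ν j * (N i j + ∑ k, Γ i k j * ν k) = 0) :
    ∑ j, ν j * ∑ i, (D i j * ν i + ξ i * N i j) = ∑ i, ∑ j, h i j * ν i * ν j - ∑ i, ν i * du i := by
  have e1 : ∑ i, ν i * ∑ j, ν j * D i j = ∑ i, ∑ j, h i j * ν i * ν j - ∑ i, ν i * du i +
      ∑ i, ∑ j, ν i * ξ j * N j i + 2 * ∑ i, ∑ j, ∑ k, Γ k i j * ξ k * ν i * ν j := by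
    have : ∑ i, ∑ j, ∑ k, Γ k j i * ξ k * ν i * ν j = ∑ i, ∑ j, ∑ k, Γ k i j * ξ k * ν i * ν j := by
      rw [Finset.sum_comm]
      refine Finset.sum_congr rfl fun i _ => Finset.sum_congr rfl fun j _ =>
        Finset.sum_congr rfl fun k _ => by ring
    rw [two_mul]
    nth_rewrite 2 [← this]
    rw [← Finset.sum_sub_distrib, ← Finset.sum_add_distrib, ← Finset.sum_add_distrib,
      ← Finset.sum_add_distrib]
    refine Finset.sum_congr rfl fun i _ => ?_
    have f1 : ν i * ∑ j, h i j * ν j = ∑ j, h i j * ν i * ν j := by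
      rw [Finset.mul_sum]; exact Finset.sum_congr rfl fun j _ => by ring
    have f2 : ν i * ∑ j, ξ j * N j i = ∑ j, ν i * ξ j * N j i := by
      rw [Finset.mul_sum]; exact Finset.sum_congr rfl fun j _ => by ring
    have f3 : ν i * ∑ j, ∑ k, (Γ k i j + Γ k j i) * ξ k * ν j =
        ∑ j, ∑ k, Γ k i j * ξ k * ν i * ν j + ∑ j, ∑ k, Γ k j i * ξ k * ν i * ν j := by
      rw [Finset.mul_sum, ← Finset.sum_add_distrib]
      refine Finset.sum_congr rfl fun j _ => ?_
      rw [← Finset.sum_add_distrib, Finset.mul_sum]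
      exact Finset.sum_congr rfl fun k _ => by ring
    rw [ode i, mul_add, mul_add, mul_sub, f1, f2, f3]
  have e2 : ∑ i, ∑ j, ξ i * (ν j * N i j) + ∑ i, ∑ j, ∑ k, Γ k i j * ξ k * ν i * ν j = 0 := by
    have : ∑ i, ∑ j, ∑ k, Γ k i j * ξ k * ν i * ν j =
        ∑ i, ∑ j, ∑ k, ξ i * (ν j * (Γ i k j * ν k)) := by
      calc _ = ∑ i, ∑ k, ∑ j, Γ k i j * ξ k * ν i * ν j :=
            Finset.sum_congr rfl fun i _ => Finset.sum_comm
        _ = ∑ k, ∑ i, ∑ j, Γ k i j * ξ k * ν i * ν j := Finset.sum_comm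
        _ = ∑ k, ∑ j, ∑ i, Γ k i j * ξ k * ν i * ν j :=
            Finset.sum_congr rfl fun i _ => Finset.sum_comm
        _ = _ := Finset.sum_congr rfl fun i _ => Finset.sum_congr rfl fun j _ =>
            Finset.sum_congr rfl fun k _ => by ring
    rw [this, ← Finset.sum_add_distrib]
    refine Finset.sum_eq_zero fun i _ => ?_
    rw [← Finset.sum_add_distrib]
    have := congrArg (fun t => ξ i * t) (par i)
    simp only [mul_zero] at this
    rw [← this, Finset.mul_sum]
    refine Finset.sum_congr rfl fun j _ => ?_
    rw [mul_add, mul_add, Finset.mul_sum, Finset.mul_sum]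
  have e3 : ∑ j, ν j * ∑ i, (D i j * ν i + ξ i * N i j) =
      ∑ i, ν i * ∑ j, ν j * D i j + ∑ i, ∑ j, ξ i * (ν j * N i j) := by
    simp only [Finset.mul_sum, mul_add, Finset.sum_add_distrib]
    congr 1
    · rw [Finset.sum_comm]
      exact Finset.sum_congr rfl fun i _ => Finset.sum_congr rfl fun j _ => by ring
    · rw [Finset.sum_comm]
      exact Finset.sum_congr rfl fun i _ => Finset.sum_congr rfl fun j _ => by ring
  have e4 : ∑ i, ∑ j, ν i * ξ j * N j i = ∑ i, ∑ j, ξ i * (ν j * N i j) := by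
    rw [Finset.sum_comm]
    exact Finset.sum_congr rfl fun i _ => Finset.sum_congr rfl fun j _ => by ring
  rw [e3, e1, e4]
  linarith

lemma algA2 {n : ℕ} (ν ξ du : Fin n → ℝ) (D N h : Fin n → Fin n → ℝ) (Γ : Fin n → Fin n → Fin n → ℝ)
    (ode : ∀ i, ∑ j, ν j * D i j = ∑ j, h i j * ν j - du i + ∑ j, ξ j * N j i +
      ∑ j, ∑ k, (Γ k i j + Γ k j i) * ξ k * ν j)
    (hdu : ∀ i, du i = ∑ k, (D k i * ν k + ξ k * N k i)) (i : Fin n) :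
    ∑ j, ((D i j - ∑ k, Γ k i j * ξ k) + (D j i - ∑ k, Γ k j i * ξ k)) * ν j = ∑ j, h i j * ν j := by
  have e : ∑ j, ((D i j - ∑ k, Γ k i j * ξ k) + (D j i - ∑ k, Γ k j i * ξ k)) * ν j =
      ∑ j, ν j * D i j + ∑ j, D j i * ν j - ∑ j, ∑ k, (Γ k i j + Γ k j i) * ξ k * ν j := by
    rw [← Finset.sum_add_distrib, ← Finset.sum_sub_distrib]
    refine Finset.sum_congr rfl fun j _ => ?_
    simp only [← Finset.sum_mul, add_mul, Finset.sum_add_distrib]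
    ring
  rw [e, ode i, hdu i, Finset.sum_add_distrib]
  ring

end PartOne

section PartTwo
open scoped Topology

lemma an_det {n : ℕ} {A : Pt n → Matrix (Fin n) (Fin n) ℝ} {x : Pt n}
    (hA : ∀ i j, AnalyticAt ℝ (fun y => A y i j) x) : AnalyticAt ℝ (fun y => (A y).det) x := by
  simp only [Matrix.det_apply']
  exact Finset.analyticAt_fun_sum _ fun σ _ => analyticAt_const.mul
    (Finset.analyticAt_fun_prod _ fun i _ => hA _ _)

lemma det_ne {n : ℕ} {g : Pt n → Fin n → Fin n → ℝ} (hg : posdef g) (x : Pt n) :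
    (Matrix.of (g x)).det ≠ 0 := by
  intro h0
  obtain ⟨v, hv, hv0⟩ := Matrix.exists_mulVec_eq_zero_iff.2 h0
  have h1 := hg x v hv
  have h2 : ∑ i, ∑ j, g x i j * v i * v j = ∑ i, v i * (Matrix.of (g x)).mulVec v i := by
    simp only [Matrix.mulVec, dotProduct, Matrix.of_apply, Finset.mul_sum]
    exact Finset.sum_congr rfl fun i _ => Finset.sum_congr rfl fun j _ => by ring
  rw [h2, hv0] at h1
  simp at h1

lemma an_ginv {n : ℕ} {g : Pt n → Fin n → Fin n → ℝ} (hg : posdef g) {x : Pt n}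
    (hA : ∀ i j, AnalyticAt ℝ (fun y => g y i j) x) (i j : Fin n) :
    AnalyticAt ℝ (fun y => ginv g y i j) x := by
  have e : (fun y => ginv g y i j) = fun y => ((Matrix.of (g y)).det)⁻¹ *
      ((Matrix.of (g y)).updateRow j (Pi.single i 1)).det := by
    funext y
    simp only [ginv, Matrix.inv_def, Ring.inverse_eq_inv', Matrix.smul_apply, smul_eq_mul,
      Matrix.adjugate_apply]
  rw [e]
  refine ((an_det (A := fun y => Matrix.of (g y)) hA).inv (det_ne hg x)).mul (an_det fun a b => ?_)
  by_cases hab : a = j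
  · subst hab
    simp only [Matrix.updateRow_self]
    exact analyticAt_const
  · simp only [Matrix.updateRow_ne hab]
    exact hA a b

lemma g_ginv {n : ℕ} {g : Pt n → Fin n → Fin n → ℝ} (hg : posdef g) (x : Pt n) (i k : Fin n) :
    ∑ j, g x i j * ginv g x j k = if i = k then 1 else 0 := by
  have h := Matrix.mul_nonsing_inv (Matrix.of (g x)) (isUnit_iff_ne_zero.2 (det_ne hg x))
  have h2 := congrFun (congrFun h i) k
  simpa [Matrix.mul_apply, ginv, Matrix.one_apply] using h2

lemma lower_raise {n : ℕ} {g : Pt n → Fin n → Fin n → ℝ} (hg : posdef g) (x : Pt n)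
    (w : Fin n → ℝ) (i : Fin n) :
    ∑ j, g x i j * (∑ k, ginv g x j k * w k) = w i := by
  simp only [Finset.mul_sum]
  rw [Finset.sum_comm]
  have : ∀ k, ∑ j, g x i j * (ginv g x j k * w k) = (if i = k then 1 else 0) * w k := by
    intro k
    rw [← g_ginv hg x i k, Finset.sum_mul]
    exact Finset.sum_congr rfl fun j _ => by ring
  simp [this]

lemma an_pd {n : ℕ} {φ : Pt n → ℝ} {x : Pt n} (h : AnalyticAt ℝ φ x) (i : Fin n) :
    AnalyticAt ℝ (fun y => pd i φ y) x :=
  (ContinuousLinearMap.apply ℝ ℝ (Pi.single i (1:ℝ) : Pt n)).analyticAt _ |>.comp h.fderiv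

lemma an_chr {n : ℕ} {g : Pt n → Fin n → Fin n → ℝ} (hg : posdef g) {x : Pt n}
    (hA : ∀ i j, AnalyticAt ℝ (fun y => g y i j) x) (k i j : Fin n) :
    AnalyticAt ℝ (fun y => chr g y k i j) x := by
  unfold chr
  exact analyticAt_const.mul (Finset.analyticAt_fun_sum _ fun l _ => (an_ginv hg hA k l).mul
    (((an_pd (hA _ _) _).add (an_pd (hA _ _) _)).sub (an_pd (hA _ _) _)))

lemma fderiv_eq_sum {n : ℕ} (φ : Pt n → ℝ) (x v : Pt n) :
    fderiv ℝ φ x v = ∑ j, v j * pd j φ x := by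
  conv_lhs => rw [← Finset.univ_sum_single v]
  rw [map_sum]
  refine Finset.sum_congr rfl fun j _ => ?_
  have : (Pi.single j (v j) : Pt n) = v j • Pi.single j (1:ℝ) := by
    rw [← Pi.single_smul]; simp
  rw [this, map_smul]; rfl

lemma qpos {n : ℕ} {g : Pt n → Fin n → Fin n → ℝ} (hg : posdef g) {f : Pt n → ℝ} {x : Pt n}
    (hf : fderiv ℝ f x ≠ 0) : 0 < ∑ j, ∑ k, ginv g x j k * pd j f x * pd k f x := by
  have hw : gradV g f x ≠ 0 := by
    intro h0
    apply hf
    ext v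
    rw [fderiv_eq_sum]
    simp only [zero_apply]
    refine Finset.sum_eq_zero fun i _ => ?_
    rw [← lower_raise hg x (fun k => pd k f x) i]
    have : ∀ j, (∑ k, ginv g x j k * pd k f x) = 0 := fun j => congrFun h0 j
    simp [this]
  have h1 := hg x _ hw
  have h2 : ∑ i, ∑ j, g x i j * gradV g f x i * gradV g f x j =
      ∑ j, ∑ k, ginv g x j k * pd j f x * pd k f x := by
    refine Finset.sum_congr rfl fun i _ => ?_
    have : ∑ j, g x i j * gradV g f x i * gradV g f x j = gradV g f x i * pd i f x := by
      rw [← lower_raise hg x (fun k => pd k f x) i, Finset.mul_sum]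
      exact Finset.sum_congr rfl fun j _ => by rw [gradV, gradV]; ring
    rw [this, gradV, Finset.sum_mul]
    exact Finset.sum_congr rfl fun j _ => by ring
  rwa [h2] at h1

lemma fderiv_nu {n : ℕ} {g : Pt n → Fin n → Fin n → ℝ} (hg : posdef g) {f : Pt n → ℝ} {x : Pt n}
    (hf : fderiv ℝ f x ≠ 0) : fderiv ℝ f x (nuV g f x) ≠ 0 := by
  have hq := qpos hg hf
  rw [fderiv_eq_sum]
  have : ∑ j, nuV g f x j * pd j f x = (∑ j, ∑ k, ginv g x j k * pd j f x * pd k f x) /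
      Real.sqrt (∑ j, ∑ k, ginv g x j k * pd j f x * pd k f x) := by
    rw [Finset.sum_div]
    refine Finset.sum_congr rfl fun i _ => ?_
    rw [nuV, gradV, div_mul_eq_mul_div, Finset.sum_mul]
    congr 1
    exact Finset.sum_congr rfl fun j _ => by ring
  rw [this]
  exact (div_pos hq (Real.sqrt_pos.2 hq)).ne'

lemma an_q {n : ℕ} {g : Pt n → Fin n → Fin n → ℝ} (hg : posdef g) {f : Pt n → ℝ} {x : Pt n}
    (hA : ∀ i j, AnalyticAt ℝ (fun y => g y i j) x) (hf : AnalyticAt ℝ f x) :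
    AnalyticAt ℝ (fun y => ∑ j, ∑ k, ginv g y j k * pd j f y * pd k f y) x :=
  Finset.analyticAt_fun_sum _ fun j _ => Finset.analyticAt_fun_sum _ fun k _ =>
    ((an_ginv hg hA j k).mul (an_pd hf j)).mul (an_pd hf k)

lemma an_nu {n : ℕ} {g : Pt n → Fin n → Fin n → ℝ} (hg : posdef g) {f : Pt n → ℝ} {x : Pt n}
    (hA : ∀ i j, AnalyticAt ℝ (fun y => g y i j) x) (hf : AnalyticAt ℝ f x)
    (hq : 0 < ∑ j, ∑ k, ginv g x j k * pd j f x * pd k f x) (i : Fin n) :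
    AnalyticAt ℝ (fun y => nuV g f y i) x := by
  unfold nuV gradV
  refine AnalyticAt.div (Finset.analyticAt_fun_sum _ fun j _ =>
    (an_ginv hg hA i j).mul (an_pd hf j)) ?_ (Real.sqrt_pos.2 hq).ne'
  exact AnalyticAt.comp (g := Real.sqrt)
    (f := fun y => ∑ j, ∑ k, ginv g y j k * pd j f y * pd k f y)
    ((Real.contDiffAt_sqrt hq.ne').analyticAt) (an_q hg hA hf)

lemma pd_sum_mul {n : ℕ} {ξ ν : Pt n → Fin n → ℝ} {x : Pt n}
    (hξ : ∀ i, AnalyticAt ℝ (fun y => ξ y i) x) (hν : ∀ i, AnalyticAt ℝ (fun y => ν y i) x)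
    (j : Fin n) : pd j (fun y => ∑ i, ξ y i * ν y i) x =
      ∑ i, (pd j (fun y => ξ y i) x * ν x i + ξ x i * pd j (fun y => ν y i) x) := by
  unfold pd
  rw [fderiv_fun_sum (A := fun i y => ξ y i * ν y i)
    (fun i _ => ((hξ i).mul (hν i)).differentiableAt)]
  simp only [_root_.sum_apply]
  refine Finset.sum_congr rfl fun i _ => ?_
  rw [fderiv_fun_mul (hξ i).differentiableAt (hν i).differentiableAt]
  simp
  ring

lemma an_fst {n : ℕ} {F : Type*} [NormedAddCommGroup F] [NormedSpace ℝ F] {φ : Pt n → ℝ}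
    {x : Pt n} (z : F) (h : AnalyticAt ℝ φ x) :
    AnalyticAt ℝ (fun p : Pt n × F => φ p.1) (x, z) :=
  AnalyticAt.comp (g := φ) (f := fun p : Pt n × F => p.1) h analyticAt_fst

lemma an_snd {n : ℕ} (x z : Pt n) (j : Fin n) :
    AnalyticAt ℝ (fun p : Pt n × Pt n => p.2 j) (x, z) :=
  analyticAt_pi_iff.1 (analyticAt_snd : AnalyticAt ℝ (fun p : Pt n × Pt n => p.2) (x, z)) j

end PartTwo

/-- analytic geodesic gauge construction: if `Σ = f⁻¹(0)` is an
analytic hypersurface in the boundary of `M`, `g` and `h` are analytic near `Σ`,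
and `ν` is the parallel extension of the unit normal (`∇_ν ν = 0`), then there is
an analytic vector field `X` in a collar neighborhood of `Σ` with `X = 0` on `Σ`
and `(L_X g)(ν,·) = h(ν,·)` there. -/
theorem statement5 {n : ℕ}
    (g h : Pt n → Fin n → Fin n → ℝ) (f : Pt n → ℝ)
    (W₀ : Set (Pt n)) (hW₀ : IsOpen W₀) (hSW0 : f ⁻¹' {(0:ℝ)} ⊆ W₀)
    (hgsym : symT g) (hgpos : posdef g) (hhsym : symT h)
    (hgan : ∀ i j, AnalyticOnNhd ℝ (fun x => g x i j) W₀)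
    (hhan : ∀ i j, AnalyticOnNhd ℝ (fun x => h x i j) W₀)
    (hfan : AnalyticOnNhd ℝ f W₀)
    (hreg : ∀ x ∈ f ⁻¹' {(0:ℝ)}, fderiv ℝ f x ≠ 0)
    -- the unit normal is extended parallelly along itself: `∇_ν ν = 0` near `Σ`
    (hpar : ∀ x ∈ W₀, ∀ i : Fin n, ∑ j, nuV g f x j * cdVec g (nuV g f) x i j = 0) :
    ∃ W : Set (Pt n), IsOpen W ∧ f ⁻¹' {(0:ℝ)} ⊆ W ∧ W ⊆ W₀ ∧
      ∃ X : Pt n → Fin n → ℝ,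
        (∀ i, AnalyticOnNhd ℝ (fun x => X x i) W) ∧
        (∀ x ∈ f ⁻¹' {(0:ℝ)}, ∀ i, X x i = 0) ∧
        (∀ x ∈ W, ∀ i : Fin n,
          ∑ j, lieg g X x i j * nuV g f x j = ∑ j, h x i j * nuV g f x j) := by
  have hS : ∀ x, f x = 0 → x ∈ f ⁻¹' {(0:ℝ)} := fun x hx => hx
  set ν := nuV g f with hν
  let q : Pt n → ℝ := fun y => ∑ j, ∑ k, ginv g y j k * pd j f y * pd k f y
  have hqan : ∀ x ∈ W₀, AnalyticAt ℝ q x := fun x hx =>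
    an_q hgpos (fun i j => hgan i j x hx) (hfan x hx)
  let W₁ : Set (Pt n) := W₀ ∩ {x | 0 < q x}
  have hW₁ : IsOpen W₁ := by
    have hc : ContinuousOn q W₀ := fun x hx => (hqan x hx).continuousAt.continuousWithinAt
    exact hc.isOpen_inter_preimage hW₀ isOpen_Ioi
  have hSW₁ : f ⁻¹' {(0:ℝ)} ⊆ W₁ := fun x hx => ⟨hSW0 hx, qpos hgpos (hreg x hx)⟩
  have hνan : ∀ x ∈ W₁, ∀ i, AnalyticAt ℝ (fun y => ν y i) x := fun x hx i =>
    an_nu hgpos (fun i j => hgan i j x hx.1) (hfan x hx.1) hx.2 i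
  have hνan2 : AnalyticOnNhd ℝ ν W₁ := fun x hx => analyticAt_pi_iff.2 (hνan x hx)
  have hfν : ∀ x ∈ f ⁻¹' {(0:ℝ)}, fderiv ℝ f x (ν x) ≠ 0 := fun x hx =>
    fderiv_nu hgpos (hreg x hx)
  obtain ⟨Wa, hWa, hSWa, hWa1, u, huan, hu0, hu⟩ := global_transport (F := ℝ)
    (B := fun p => (1/2) * ∑ i, ∑ j, h p.1 i j * ν p.1 i * ν p.1 j) hW₁ hSW₁
    (fun x hx => hfan x hx.1) hνan2 (fun x hx z => analyticAt_const.mul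
      (Finset.analyticAt_fun_sum _ fun i _ => Finset.analyticAt_fun_sum _ fun j _ =>
      ((an_fst z (hhan i j x hx.1)).mul (an_fst z (hνan x hx i))).mul
        (an_fst z (hνan x hx j)))) hfν
  obtain ⟨Wb, hWb, hSWb, hWba, ξ, hξan, hξ0, hξ⟩ := global_transport (F := Pt n)
    (B := fun p i => ∑ j, h p.1 i j * ν p.1 j - pd i u p.1 +
      ∑ j, p.2 j * pd i (fun y => ν y j) p.1 +
      ∑ j, ∑ k, (chr g p.1 k i j + chr g p.1 k j i) * p.2 k * ν p.1 j) hWa hSWa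
    (fun x hx => hfan x (hWa1 hx).1) (fun x hx => hνan2 x (hWa1 hx)) (fun x hx z => by
      have hx1 := hWa1 hx
      refine analyticAt_pi_iff.2 fun i => ?_
      refine (((Finset.analyticAt_fun_sum _ fun j _ => ?_).sub ?_).add
        (Finset.analyticAt_fun_sum _ fun j _ => ?_)).add
        (Finset.analyticAt_fun_sum _ fun j _ => Finset.analyticAt_fun_sum _ fun k _ => ?_)
      · exact (an_fst z (hhan i j x hx1.1)).mul (an_fst z (hνan x hx1 j))
      · exact an_fst z (an_pd (huan x hx) i)
      · exact (an_snd x z j).mul (an_fst z (an_pd (hνan x hx1 j) i))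
      · exact (((an_fst z (an_chr hgpos (fun a b => hgan a b x hx1.1) k i j)).add
          (an_fst z (an_chr hgpos (fun a b => hgan a b x hx1.1) k j i))).mul
          (an_snd x z k)).mul (an_fst z (hνan x hx1 j))) hfν
  have hb1 : ∀ x ∈ Wb, x ∈ W₁ := fun x hx => hWa1 (hWba hx)
  have hξi : ∀ x ∈ Wb, ∀ i, AnalyticAt ℝ (fun y => ξ y i) x := fun x hx =>
    analyticAt_pi_iff.1 (hξan x hx)
  have ode : ∀ x ∈ Wb, ∀ i, ∑ j, ν x j * pd j (fun y => ξ y i) x =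
      ∑ j, h x i j * ν x j - pd i u x + ∑ j, ξ x j * pd i (fun y => ν y j) x +
      ∑ j, ∑ k, (chr g x k i j + chr g x k j i) * ξ x k * ν x j := by
    intro x hx i
    rw [← fderiv_eq_sum]
    have hd := (hasFDerivAt_pi'.1 (hξan x hx).differentiableAt.hasFDerivAt) i
    rw [hd.fderiv]
    exact congrFun (hξ x hx) i
  let z : Pt n → ℝ := fun y => ∑ i, ξ y i * ν y i - u y
  have hzan : ∀ x ∈ Wb, AnalyticAt ℝ z x := fun x hx =>
    (Finset.analyticAt_fun_sum _ fun i _ => (hξi x hx i).mul (hνan x (hb1 x hx) i)).sub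
      (huan x (hWba hx))
  have hpdz : ∀ x ∈ Wb, ∀ j, pd j z x = ∑ i, (pd j (fun y => ξ y i) x * ν x i +
      ξ x i * pd j (fun y => ν y i) x) - pd j u x := by
    intro x hx j
    rw [← pd_sum_mul (hξi x hx) (hνan x (hb1 x hx)) j]
    unfold pd
    have := fderiv_fun_sub (𝕜 := ℝ) (f := fun y => ∑ i, ξ y i * ν y i) (g := u) (x := x)
      (Finset.analyticAt_fun_sum _ fun i _ =>
        (hξi x hx i).mul (hνan x (hb1 x hx) i)).differentiableAt
      (huan x (hWba hx)).differentiableAt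
    rw [show fderiv ℝ z x = _ from this]
    rfl
  have hzν : ∀ x ∈ Wb, fderiv ℝ z x (ν x) = 0 := by
    intro x hx
    have a1 := algA1 (ν x) (ξ x) (fun i => pd i u x) (fun i j => pd j (fun y => ξ y i) x)
      (fun i j => pd j (fun y => ν y i) x) (h x) (chr g x) (ode x hx) (hpar x (hb1 x hx).1)
    have a2 := hu x (hWba hx)
    rw [fderiv_eq_sum] at a2
    simp only at a2
    rw [fderiv_eq_sum]
    simp only [hpdz x hx, mul_sub, Finset.sum_sub_distrib]
    rw [a1, a2]
    ring
  have hznear : ∀ x ∈ f ⁻¹' {(0:ℝ)}, ∀ᶠ y in nhds x, z y = 0 := by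
    intro x hx
    refine transport_zero (hfan x (hSW0 hx)) hx (hνan2 x (hSW₁ hx)) (hfν x hx)
      (hzan x (hSWb hx)) ?_ ?_
    · filter_upwards [hWb.mem_nhds (hSWb hx)] with y hy using hzν y hy
    · refine Eventually.of_forall fun y hy => ?_
      simp only [z, hξ0 y hy, hu0 y hy]
      simp
  have hlow : lowerV g (fun x i => ∑ j, ginv g x i j * ξ x j) = ξ := by
    funext x i
    exact lower_raise hgpos x (ξ x) i
  refine ⟨Wb ∩ {x | ∀ᶠ y in nhds x, z y = 0}, hWb.inter isOpen_setOfPred_eventually_nhds,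
    fun x hx => ⟨hSWb hx, hznear x hx⟩, fun x hx => (hb1 x hx.1).1,
    fun x i => ∑ j, ginv g x i j * ξ x j, ?_, ?_, ?_⟩
  · intro i x hx
    exact Finset.analyticAt_fun_sum _ fun j _ =>
      (an_ginv hgpos (fun a b => hgan a b x (hb1 x hx.1).1) i j).mul (hξi x hx.1 j)
  · intro x hx i
    simp [hξ0 x hx]
  · intro x hx i
    simp only [lieg, hlow, cdCov]
    refine algA2 (ν x) (ξ x) (fun i => pd i u x) (fun i j => pd j (fun y => ξ y i) x)
      (fun i j => pd j (fun y => ν y i) x) (h x) (chr g x) (ode x hx.1) (fun j => ?_) i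
    have h1 := hpdz x hx.1 j
    have h2 : pd j z x = 0 := by
      have : z =ᶠ[nhds x] fun _ => 0 := hx.2
      unfold pd
      rw [this.fderiv_eq]
      simp
    linarith
end
end

section
/- Let (M,ḡ) be a Riemannian manifold with analytic interior (ḡ analytic in suitable coordinates), Σ ⊂ ∂M an open subset of the boundary, and h ∈ C^{ℓ+2,α} a symmetric (0,2)-tensor satisfying the geodesic gauge h(ν,·) = 0 in a collar neighborhood of Σ (ν parallel normal). Then for any integer ℓ ≥ 0, the following two sets of boundary conditions on Σ are equivalent: (i) h^⊤ = 0, A'(h) = 0, and ((∇^k_ν Ric)'(h))^⊤ = 0 for k = 0,...,ℓ; (ii) h = 0, ∇h = 0, and ∇^{k+2}h = 0 on Σ for k = 0,...,ℓ. -/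
noncomputable section

open scoped BigOperators
open MeasureTheory Filter

/-- Iterated normal covariant derivative of the Ricci tensor: `∇^k_ν Ric`. -/
def nuRic {n : ℕ} (g : Pt n → Fin n → Fin n → ℝ) (f : Pt n → ℝ) :
    ℕ → Pt n → Fin n → Fin n → ℝ
  | 0 => fun x i j => ric g x i j
  | (k+1) => fun x i j => ∑ l, nuV g f x l * cd2 g (nuRic g f k) x i j l

/-- Linearization of `∇^k_ν Ric` at `g` in the direction `h`. -/
def nuRicLin {n : ℕ} (g h : Pt n → Fin n → Fin n → ℝ) (f : Pt n → ℝ) (k : ℕ)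
    (x : Pt n) (i j : Fin n) : ℝ :=
  deriv (fun s : ℝ => nuRic (mpert g h s) f k x i j) 0

/-- Iterated `∇_ν` (with respect to the fixed background metric) applied
to a (0,2)-tensor. -/
def nuDerIter {n : ℕ} (g : Pt n → Fin n → Fin n → ℝ) (f : Pt n → ℝ) :
    ℕ → (Pt n → Fin n → Fin n → ℝ) → Pt n → Fin n → Fin n → ℝ
  | 0, T => T
  | (k+1), T => fun x i j => ∑ l, nuV g f x l * cd2 g (nuDerIter g f k T) x i j l

/-- Covariant derivative of a rank-`r` covariant tensor (the new index is last). -/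
def cdT {n r : ℕ} (g : Pt n → Fin n → Fin n → ℝ)
    (T : Pt n → (Fin r → Fin n) → ℝ) (x : Pt n) (I : Fin (r+1) → Fin n) : ℝ :=
  pd (I (Fin.last r)) (fun y => T y (fun m => I m.castSucc)) x
  - ∑ m : Fin r, ∑ k, chr g x k (I m.castSucc) (I (Fin.last r)) *
      T x (Function.update (fun m' => I m'.castSucc) m k)

/-- Iterated covariant derivative `∇^m h` of a (0,2)-tensor `h`. -/
def itCDh {n : ℕ} (g h : Pt n → Fin n → Fin n → ℝ) :
    (m : ℕ) → Pt n → (Fin (m+2) → Fin n) → ℝ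
  | 0 => fun x I => h x (I 0) (I 1)
  | (m+1) => fun x I => cdT g (itCDh g h m) x I

section Aux
open scoped ContDiff Topology

/-- `VS f m u s`: near `f = 0`, `u` is `C^m`, all derivatives of order `< m` vanish on `f = 0`, and
the `m`-th derivatives there are `s` times the `m`-fold product of the conormal `df`. -/
def VS {n : ℕ} (f : Pt n → ℝ) : ℕ → (Pt n → ℝ) → (Pt n → ℝ) → Prop
  | 0, u, s => ∀ x, f x = 0 → ContDiffAt ℝ (0 : ℕ) u x ∧ u x = s x
  | (m+1), u, s => (∀ x, f x = 0 → ContDiffAt ℝ (m+1 : ℕ) u x ∧ u x = 0) ∧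
      ∀ i, VS f m (pd i u) (fun x => pd i f x * s x)

theorem pd_contDiffAt {n : ℕ} {u : Pt n → ℝ} {x : Pt n} {m k : WithTop ℕ∞} (i : Fin n)
    (hu : ContDiffAt ℝ k u x) (hm : m + 1 ≤ k) : ContDiffAt ℝ m (pd i u) x := by
  unfold pd
  exact (hu.fderiv_right hm).clm_apply contDiffAt_const

theorem pd_congr {n : ℕ} {u v : Pt n → ℝ} {x : Pt n} (i : Fin n) (h : u =ᶠ[𝓝 x] v) :
    pd i u =ᶠ[𝓝 x] pd i v := by
  have := h.fderiv (𝕜 := ℝ)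
  filter_upwards [this] with y hy
  simp [pd, hy]

theorem ev_diff {n : ℕ} {u : Pt n → ℝ} {x : Pt n} {m : ℕ} (h : ContDiffAt ℝ (m+1 : ℕ) u x) :
    ∀ᶠ y in 𝓝 x, DifferentiableAt ℝ u y := by
  have := h.eventually (by simp)
  filter_upwards [this] with y hy
  exact hy.differentiableAt (by simp)

variable {n : ℕ} {f : Pt n → ℝ}

theorem VS.reg {m : ℕ} {u s : Pt n → ℝ} (h : VS f m u s) {x} (hx : f x = 0) :
    ContDiffAt ℝ m u x := by
  cases m with
  | zero => exact (h x hx).1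
  | succ m => exact (h.1 x hx).1

theorem VS.congr {m : ℕ} {u u' s s' : Pt n → ℝ} (h : VS f m u s)
    (hu : ∀ x, f x = 0 → u =ᶠ[𝓝 x] u') (hs : ∀ x, f x = 0 → s x = s' x) : VS f m u' s' := by
  induction m generalizing u u' s s' with
  | zero =>
    intro x hx
    refine ⟨(h x hx).1.congr_of_eventuallyEq (hu x hx).symm, ?_⟩
    rw [← (hu x hx).eq_of_nhds, (h x hx).2, hs x hx]
  | succ m ih =>
    refine ⟨fun x hx => ⟨(h.1 x hx).1.congr_of_eventuallyEq (hu x hx).symm, ?_⟩, fun i => ?_⟩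
    · rw [← (hu x hx).eq_of_nhds, (h.1 x hx).2]
    · exact ih (h.2 i) (fun x hx => pd_congr i (hu x hx)) (fun x hx => by simp [hs x hx])

theorem VS.congrS {m : ℕ} {u s s' : Pt n → ℝ} (h : VS f m u s)
    (hs : ∀ x, f x = 0 → s x = s' x) : VS f m u s' :=
  h.congr (fun _ _ => Filter.EventuallyEq.rfl) hs

theorem VS.zero (m : ℕ) : VS f m (fun _ => 0) (fun _ => 0) := by
  induction m with
  | zero => exact fun x _ => ⟨contDiffAt_const, rfl⟩
  | succ m ih =>
    refine ⟨fun x _ => ⟨contDiffAt_const, rfl⟩, fun i => ih.congr ?_ ?_⟩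
    · intro x _
      refine Filter.Eventually.of_forall fun y => ?_
      simp [pd]
    · simp

theorem VS.weaken {m : ℕ} {u s : Pt n → ℝ} (h : VS f (m+1) u s) : VS f m u (fun _ => 0) := by
  induction m generalizing u s with
  | zero => exact fun x hx => ⟨(h.1 x hx).1.of_le (by simp), (h.1 x hx).2⟩
  | succ m ih =>
    refine ⟨fun x hx => ⟨(h.1 x hx).1.of_le (by exact_mod_cast Nat.le_succ _), (h.1 x hx).2⟩,
      fun i => (ih (h.2 i)).congrS (by simp)⟩

theorem VS.value {m : ℕ} {u : Pt n → ℝ} (h : VS f m u (fun _ => 0)) {x} (hx : f x = 0) :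
    u x = 0 := by
  cases m with
  | zero => exact (h x hx).2
  | succ m => exact (h.1 x hx).2

theorem VS.add {m : ℕ} {u v s t : Pt n → ℝ} (hu : VS f m u s) (hv : VS f m v t) :
    VS f m (fun x => u x + v x) (fun x => s x + t x) := by
  induction m generalizing u v s t with
  | zero => exact fun x hx => ⟨(hu x hx).1.add (hv x hx).1, by beta_reduce; rw [(hu x hx).2, (hv x hx).2]⟩
  | succ m ih =>
    refine ⟨fun x hx => ⟨(hu.1 x hx).1.add (hv.1 x hx).1, by
      beta_reduce; rw [(hu.1 x hx).2, (hv.1 x hx).2, add_zero]⟩, fun i => (ih (hu.2 i) (hv.2 i)).congr ?_ ?_⟩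
    · intro x hx
      filter_upwards [ev_diff (hu.1 x hx).1, ev_diff (hv.1 x hx).1] with y h1 h2
      simp only [pd]
      rw [fderiv_fun_add h1 h2]; rfl
    · intro x hx; ring

theorem VS.smul {m : ℕ} {a u s : Pt n → ℝ} (ha : ∀ x, f x = 0 → ContDiffAt ℝ ∞ a x)
    (hu : VS f m u s) : VS f m (fun x => a x * u x) (fun x => a x * s x) := by
  induction m generalizing u a s with
  | zero => exact fun x hx => ⟨((ha x hx).of_le (by simp)).mul (hu x hx).1, by beta_reduce; rw [(hu x hx).2]⟩
  | succ m ih =>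
    refine ⟨fun x hx => ⟨((ha x hx).of_le (by exact_mod_cast le_top)).mul (hu.1 x hx).1, by
      beta_reduce; rw [(hu.1 x hx).2, mul_zero]⟩, fun i => ?_⟩
    have h1 := ih ha (hu.2 i)
    have h2 := ih (fun x hx => pd_contDiffAt i (ha x hx) (m := ∞) (by simp)) hu.weaken
    refine (h1.add h2).congr ?_ ?_
    · intro x hx
      have hd : ContDiffAt ℝ (m+1 : ℕ) a x := (ha x hx).of_le (by exact_mod_cast le_top)
      filter_upwards [ev_diff (hu.1 x hx).1, ev_diff hd] with y h1 h2
      simp only [pd]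
      rw [fderiv_fun_mul h2 h1]
      simp; ring
    · intro x hx; ring

theorem VS.neg {m : ℕ} {u s : Pt n → ℝ} (hu : VS f m u s) :
    VS f m (fun x => - u x) (fun x => - s x) := by
  have := VS.smul (a := fun _ => -1) (fun _ _ => contDiffAt_const) hu
  simpa using this

theorem VS.sum {ι : Type*} (S : Finset ι) {m : ℕ} {u s : ι → Pt n → ℝ}
    (hu : ∀ i, VS f m (u i) (s i)) :
    VS f m (fun x => ∑ i ∈ S, u i x) (fun x => ∑ i ∈ S, s i x) := by
  classical
  induction S using Finset.induction_on with
  | empty => simpa using VS.zero m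
  | insert a S ha ih =>
    simp only [Finset.sum_insert ha]
    exact (hu a).add ih

theorem pd_sum_single (x v : Pt n) : fderiv ℝ f x v = ∑ i, v i * pd i f x := by
  conv_lhs => rw [pi_eq_sum_univ' v]
  simp only [map_sum, map_smul, pd, smul_eq_mul]

theorem pd_ne (hreg : ∀ x, f x = 0 → fderiv ℝ f x ≠ 0) {x} (hx : f x = 0) :
    ∃ i, pd i f x ≠ 0 := by
  by_contra hc
  push Not at hc
  apply hreg x hx
  ext v
  simp [pd_sum_single, hc]

theorem VS.unique (hreg : ∀ x, f x = 0 → fderiv ℝ f x ≠ 0) {m : ℕ} {u s t : Pt n → ℝ}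
    (hu : VS f m u s) (hv : VS f m u t) {x} (hx : f x = 0) : s x = t x := by
  induction m generalizing u s t with
  | zero => rw [← (hu x hx).2, (hv x hx).2]
  | succ m ih =>
    obtain ⟨i, hi⟩ := pd_ne hreg hx
    exact mul_left_cancel₀ hi (ih (hu.2 i) (hv.2 i))

theorem pd_comm {u : Pt n → ℝ} {x : Pt n} (hu : ContDiffAt ℝ 2 u x) (i j : Fin n) :
    pd i (pd j u) x = pd j (pd i u) x := by
  have hs := hu.isSymmSndFDerivAt (by simp)
  have hd : DifferentiableAt ℝ (fderiv ℝ u) x :=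
    (hu.fderiv_right (m := 1) (by norm_num)).differentiableAt (by simp)
  have key : ∀ a b : Fin n, pd a (pd b u) x =
      fderiv ℝ (fderiv ℝ u) x (Pi.single a 1) (Pi.single b 1) := by
    intro a b
    change fderiv ℝ (fun y => fderiv ℝ u y (Pi.single b 1)) x (Pi.single a 1) = _
    rw [fderiv_clm_apply hd (by fun_prop)]
    simp
  rw [key, key, hs]

theorem exists_mult (hf : ∀ x, f x = 0 → ContDiffAt ℝ ∞ f x)
    (hreg : ∀ x, f x = 0 → fderiv ℝ f x ≠ 0) {u : Pt n → ℝ} {x} (hx : f x = 0)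
    (hu : ContDiffAt ℝ 1 u x) (h0 : ∀ y, f y = 0 → u y = 0) :
    ∃ c, ∀ i, pd i u x = pd i f x * c := by
  have hmin : IsLocalExtrOn u {y | f y = f x} x := by
    left
    refine Filter.mem_of_superset self_mem_nhdsWithin ?_
    intro y hy
    have : f y = 0 := by rw [← hx]; exact hy
    simp [h0 y this, h0 x hx]
  obtain ⟨a, b, hab, he⟩ := hmin.exists_multipliers_of_hasStrictFDerivAt_1d
    ((hf x hx).hasStrictFDerivAt (by simp)) (hu.hasStrictFDerivAt (by simp))
  have he' : ∀ i, a * pd i f x + b * pd i u x = 0 := fun i => by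
    have := congrArg (fun L => L (Pi.single i 1)) he
    simpa [pd] using this
  have hb : b ≠ 0 := by
    rintro rfl
    obtain ⟨i, hi⟩ := pd_ne hreg hx
    have := he' i
    simp [hi] at this
    simp [this] at hab
  refine ⟨-a/b, fun i => ?_⟩
  field_simp
  linarith [he' i]

theorem VS.upgrade (hf : ∀ x, f x = 0 → ContDiffAt ℝ ∞ f x)
    (hreg : ∀ x, f x = 0 → fderiv ℝ f x ≠ 0) {m : ℕ} {u : Pt n → ℝ}
    (hu : VS f m u (fun _ => 0)) (hr : ∀ x, f x = 0 → ContDiffAt ℝ (m+1 : ℕ) u x) :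
    ∃ s, VS f (m+1) u s := by
  classical
  induction m generalizing u with
  | zero =>
    have : ∀ x, ∃ c, f x = 0 → ∀ i, pd i u x = pd i f x * c := by
      intro x
      by_cases hx : f x = 0
      · obtain ⟨c, hc⟩ := exists_mult hf hreg hx (by simpa using hr x hx) (fun y hy => (hu y hy).2)
        exact ⟨c, fun _ => hc⟩
      · exact ⟨0, fun h => absurd h hx⟩
    choose s hs using this
    refine ⟨s, fun x hx => ⟨hr x hx, (hu x hx).2⟩, fun i x hx => ⟨?_, hs x hx i⟩⟩
    exact pd_contDiffAt i (hr x hx) (by simp)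
  | succ m ih =>
    have h1 : ∀ i, ∃ s, VS f (m+1) (pd i u) s := fun i =>
      ih ((hu.2 i).congrS (by simp)) (fun x hx => pd_contDiffAt i (hr x hx) (by norm_cast))
    choose s hs using h1
    have hsym : ∀ i j x, f x = 0 → pd j f x * s i x = pd i f x * s j x := by
      intro i j x hx
      refine VS.unique hreg ((hs i).2 j) (((hs j).2 i).congr (fun y hy => ?_) (fun _ _ => rfl)) hx
      have h2 : ContDiffAt ℝ 2 u y := (hr y hy).of_le (by norm_cast; omega)
      filter_upwards [h2.eventually (by simp)] with z hz
      exact pd_comm hz i j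
    have : ∀ x, ∃ c, f x = 0 → ∀ i, s i x = pd i f x * c := by
      intro x
      by_cases hx : f x = 0
      · obtain ⟨j, hj⟩ := pd_ne hreg hx
        refine ⟨s j x / pd j f x, fun _ i => ?_⟩
        field_simp
        linarith [hsym i j x hx]
      · exact ⟨0, fun h => absurd h hx⟩
    choose c hc using this
    exact ⟨c, fun x hx => ⟨hr x hx, (hu.1 x hx).2⟩, fun i =>
      (hs i).congrS (fun x hx => hc x hx i)⟩

/-- Linearization at `s = 0` of a one-parameter family of functions. -/
def lin (F : ℝ → Pt n → ℝ) (y : Pt n) : ℝ := deriv (fun s => F s y) 0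

/-- First-order expansion in `s` with a `C^m` remainder quotient. -/
def Expd (m : ℕ) (F : ℝ → Pt n → ℝ) (Q : ℝ × Pt n → ℝ) (x : Pt n) : Prop :=
  ContDiffAt ℝ m Q (0, x) ∧ ∀ᶠ p in 𝓝 ((0 : ℝ), x), F p.1 p.2 = F 0 p.2 + p.1 * Q p

theorem Expd.lin_eq {m : ℕ} {F : ℝ → Pt n → ℝ} {Q : ℝ × Pt n → ℝ} {x : Pt n}
    (h : Expd m F Q x) : lin F =ᶠ[𝓝 x] fun y => Q (0, y) := by
  obtain ⟨hQ, hF⟩ := h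
  have hc : ∀ᶠ p in 𝓝 ((0 : ℝ), x), ContinuousAt Q p := by
    have h0 : ContDiffAt ℝ 0 Q (0, x) := hQ.of_le (by simp)
    filter_upwards [h0.eventually (by simp)] with p hp
    exact hp.continuousAt
  have key : ∀ᶠ p in 𝓝 ((0 : ℝ), x), ∀ᶠ q in 𝓝 p, F q.1 q.2 = F 0 q.2 + q.1 * Q q :=
    hF.eventually_nhds
  have hmap : Filter.Tendsto (fun y : Pt n => ((0 : ℝ), y)) (𝓝 x) (𝓝 (0, x)) :=
    (Continuous.prodMk_right (0 : ℝ)).tendsto x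
  filter_upwards [hmap.eventually key, hmap.eventually hc] with y hy hcy
  have h1 : Filter.Tendsto (fun s : ℝ => (s, y)) (𝓝 0) (𝓝 (0, y)) :=
    (Continuous.prodMk_left y).tendsto 0
  have h2 : (fun s => F s y) =ᶠ[𝓝 0] fun s => F 0 y + s * Q (s, y) := h1.eventually hy
  have h3 : HasDerivAt (fun s : ℝ => F 0 y + s * Q (s, y)) (Q (0, y)) 0 := by
    rw [hasDerivAt_iff_tendsto_slope_zero]
    have h4 : Filter.Tendsto (fun s : ℝ => Q (s, y)) (𝓝[≠] 0) (𝓝 (Q (0, y))) :=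
      (hcy.tendsto.comp h1).mono_left nhdsWithin_le_nhds
    refine h4.congr' ?_
    filter_upwards [self_mem_nhdsWithin] with s hs
    have hs : s ≠ 0 := hs
    simp [hs]
  unfold lin
  rw [h2.deriv_eq]
  exact h3.deriv

/-- A family of functions with smooth value at `s = 0` whose linearization has symbol `σ`. -/
structure PJ (f : Pt n → ℝ) (m : ℕ) (F : ℝ → Pt n → ℝ) (σ : Pt n → ℝ) : Prop where
  smooth : ∀ x, f x = 0 → ContDiffAt ℝ ∞ (F 0) x
  ex : ∀ x, f x = 0 → ∃ Q, Expd m F Q x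
  vs : VS f m (lin F) σ

theorem cd_snd {a : Pt n → ℝ} {x : Pt n} (h : ContDiffAt ℝ ∞ a x) (m : ℕ) :
    ContDiffAt ℝ m (fun p : ℝ × Pt n => a p.2) (0, x) :=
  ContDiffAt.comp (g := a) (0, x) (h.of_le (by exact_mod_cast le_top)) contDiffAt_snd

theorem ev_snd {P : Pt n → Prop} {x : Pt n} (h : ∀ᶠ y in 𝓝 x, P y) :
    ∀ᶠ p in 𝓝 ((0 : ℝ), x), P p.2 :=
  (continuous_snd.tendsto ((0 : ℝ), x)).eventually h

theorem PJ.congrS {m : ℕ} {F : ℝ → Pt n → ℝ} {s s' : Pt n → ℝ} (h : PJ f m F s)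
    (hs : ∀ x, f x = 0 → s x = s' x) : PJ f m F s' := ⟨h.smooth, h.ex, h.vs.congrS hs⟩

theorem PJ.weaken {m : ℕ} {F : ℝ → Pt n → ℝ} {s : Pt n → ℝ} (h : PJ f (m+1) F s) :
    PJ f m F (fun _ => 0) := ⟨h.smooth, fun x hx => by
      obtain ⟨Q, hQ⟩ := h.ex x hx
      exact ⟨Q, hQ.1.of_le (by exact_mod_cast Nat.le_succ _), hQ.2⟩, h.vs.weaken⟩

theorem PJ.const (m : ℕ) {a : Pt n → ℝ} (ha : ∀ x, f x = 0 → ContDiffAt ℝ ∞ a x) :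
    PJ f m (fun _ => a) (fun _ => 0) := by
  refine ⟨ha, fun x _ => ⟨fun _ => 0, contDiffAt_const, by simp⟩, ?_⟩
  refine (VS.zero m).congr (fun x _ => Filter.Eventually.of_forall fun y => ?_) (fun _ _ => rfl)
  simp [lin]

theorem PJ.add {m : ℕ} {F G : ℝ → Pt n → ℝ} {s t : Pt n → ℝ} (hF : PJ f m F s)
    (hG : PJ f m G t) : PJ f m (fun r y => F r y + G r y) (fun x => s x + t x) := by
  have ex : ∀ x, f x = 0 → ∃ Q, Expd m (fun r y => F r y + G r y) Q x ∧
      (fun y => lin F y + lin G y) =ᶠ[𝓝 x] fun y => Q (0, y) := by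
    intro x hx
    obtain ⟨P, hP⟩ := hF.ex x hx
    obtain ⟨Q, hQ⟩ := hG.ex x hx
    refine ⟨fun p => P p + Q p, ⟨hP.1.add hQ.1, ?_⟩, ?_⟩
    · filter_upwards [hP.2, hQ.2] with p h1 h2
      rw [h1, h2]; ring
    · filter_upwards [hP.lin_eq, hQ.lin_eq] with p h1 h2
      rw [h1, h2]
  refine ⟨fun x hx => (hF.smooth x hx).add (hG.smooth x hx),
    fun x hx => (ex x hx).imp fun Q h => h.1, (hF.vs.add hG.vs).congr (fun x hx => ?_) (fun _ _ => rfl)⟩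
  obtain ⟨Q, h1, h2⟩ := ex x hx
  exact h2.trans h1.lin_eq.symm

theorem PJ.mul {m : ℕ} {F G : ℝ → Pt n → ℝ} {s t : Pt n → ℝ} (hF : PJ f m F s)
    (hG : PJ f m G t) :
    PJ f m (fun r y => F r y * G r y) (fun x => F 0 x * t x + G 0 x * s x) := by
  have ex : ∀ x, f x = 0 → ∃ Q, Expd m (fun r y => F r y * G r y) Q x ∧
      (fun y => F 0 y * lin G y + G 0 y * lin F y) =ᶠ[𝓝 x] fun y => Q (0, y) := by
    intro x hx
    obtain ⟨P, hP⟩ := hF.ex x hx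
    obtain ⟨Q, hQ⟩ := hG.ex x hx
    refine ⟨fun p => F 0 p.2 * Q p + (G 0 p.2 + p.1 * Q p) * P p, ⟨?_, ?_⟩, ?_⟩
    · have h1 := cd_snd (hF.smooth x hx) m
      have h2 := cd_snd (hG.smooth x hx) m
      exact (h1.mul hQ.1).add ((h2.add (contDiffAt_fst.mul hQ.1)).mul hP.1)
    · filter_upwards [hP.2, hQ.2] with p h1 h2
      rw [h1, h2]; ring
    · filter_upwards [hP.lin_eq, hQ.lin_eq] with p h1 h2
      rw [h1, h2]; ring
  refine ⟨fun x hx => (hF.smooth x hx).mul (hG.smooth x hx),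
    fun x hx => (ex x hx).imp fun Q h => h.1,
    ((hG.vs.smul hF.smooth).add (hF.vs.smul hG.smooth)).congr (fun x hx => ?_) (fun _ _ => rfl)⟩
  obtain ⟨Q, h1, h2⟩ := ex x hx
  exact h2.trans h1.lin_eq.symm

theorem PJ.neg {m : ℕ} {F : ℝ → Pt n → ℝ} {s : Pt n → ℝ} (hF : PJ f m F s) :
    PJ f m (fun r y => - F r y) (fun x => - s x) := by
  have := (PJ.const (f := f) m (a := fun _ => -1) (fun _ _ => contDiffAt_const)).mul hF
  simpa using this

theorem PJ.sub {m : ℕ} {F G : ℝ → Pt n → ℝ} {s t : Pt n → ℝ} (hF : PJ f m F s)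
    (hG : PJ f m G t) : PJ f m (fun r y => F r y - G r y) (fun x => s x - t x) := by
  simpa [sub_eq_add_neg] using hF.add hG.neg

theorem PJ.sum {ι : Type*} (S : Finset ι) {m : ℕ} {F : ι → ℝ → Pt n → ℝ} {s : ι → Pt n → ℝ}
    (hu : ∀ i, PJ f m (F i) (s i)) :
    PJ f m (fun r x => ∑ i ∈ S, F i r x) (fun x => ∑ i ∈ S, s i x) := by
  classical
  induction S using Finset.induction_on with
  | empty => simpa using PJ.const (f := f) m (a := fun _ => 0) (fun _ _ => contDiffAt_const)
  | insert a S ha ih =>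
    simp only [Finset.sum_insert ha]
    exact (hu a).add ih

theorem PJ.pd {m : ℕ} {F : ℝ → Pt n → ℝ} {s : Pt n → ℝ} (hF : PJ f (m+1) F s) (i : Fin n) :
    PJ f m (fun r y => pd i (F r) y) (fun x => pd i f x * s x) := by
  have ex : ∀ x, f x = 0 → ∃ Q, Expd m (fun r y => _root_.pd i (F r) y) Q x ∧
      (_root_.pd i (lin F)) =ᶠ[𝓝 x] fun y => Q (0, y) := by
    intro x hx
    obtain ⟨Q, hQ⟩ := hF.ex x hx
    have hdQ : ∀ᶠ p in 𝓝 ((0 : ℝ), x), DifferentiableAt ℝ Q p := by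
      filter_upwards [hQ.1.eventually (by simp)] with p hp
      exact hp.differentiableAt (by simp)
    have hpart : ∀ p : ℝ × Pt n, DifferentiableAt ℝ Q p →
        HasFDerivAt (fun y => Q (p.1, y))
          ((fderiv ℝ Q p).comp (ContinuousLinearMap.inr ℝ ℝ (Pt n))) p.2 := by
      intro p hp
      exact HasFDerivAt.comp (g := Q) p.2 hp.hasFDerivAt (hasFDerivAt_prodMk_right p.1 p.2)
    have hpd : ∀ p : ℝ × Pt n, DifferentiableAt ℝ Q p →
        _root_.pd i (fun y => Q (p.1, y)) p.2 = fderiv ℝ Q p (0, Pi.single i 1) := by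
      intro p hp
      unfold _root_.pd
      rw [(hpart p hp).fderiv]
      simp
    refine ⟨fun p => fderiv ℝ Q p (0, Pi.single i 1), ⟨?_, ?_⟩, ?_⟩
    · exact (hQ.1.fderiv_right (by norm_cast)).clm_apply contDiffAt_const
    · have hF0 : ∀ᶠ y in 𝓝 x, DifferentiableAt ℝ (F 0) y :=
        ev_diff (m := 0) ((hF.smooth x hx).of_le (by exact_mod_cast le_top))
      filter_upwards [hdQ, ev_snd hF0, hQ.2.eventually_nhds] with p h1 h2 h3
      rw [← hpd p h1]
      have h4 : F p.1 =ᶠ[𝓝 p.2] fun y => F 0 y + p.1 * Q (p.1, y) := by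
        have ht : Filter.Tendsto (fun y : Pt n => (p.1, y)) (𝓝 p.2) (𝓝 p) :=
          (Continuous.prodMk_right p.1).tendsto p.2
        exact ht.eventually h3
      rw [(pd_congr i h4).eq_of_nhds]
      have h5 := (hpart p h1).differentiableAt
      unfold _root_.pd
      rw [fderiv_fun_add h2 (h5.const_mul _), fderiv_const_mul h5]
      simp
    · have hmap : Filter.Tendsto (fun y : Pt n => ((0 : ℝ), y)) (𝓝 x) (𝓝 (0, x)) :=
        (Continuous.prodMk_right (0 : ℝ)).tendsto x
      filter_upwards [pd_congr i hQ.lin_eq, hmap.eventually hdQ] with y h1 h2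
      rw [h1, ← hpd _ h2]
  refine ⟨fun x hx => pd_contDiffAt i (hF.smooth x hx) (by simp),
    fun x hx => (ex x hx).imp fun Q h => h.1, (hF.vs.2 i).congr (fun x hx => ?_) (fun _ _ => rfl)⟩
  obtain ⟨Q, h1, h2⟩ := ex x hx
  exact h2.trans h1.lin_eq.symm

theorem PJ.invSqrt {m : ℕ} {F : ℝ → Pt n → ℝ} (hF : PJ f m F (fun _ => 0))
    (hpos : ∀ x, f x = 0 → 0 < F 0 x) :
    PJ f m (fun r y => (Real.sqrt (F r y))⁻¹) (fun _ => 0) := by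
  have hev : ∀ x, f x = 0 → ∀ᶠ y in 𝓝 x, 0 < F 0 y := fun x hx =>
    (hF.smooth x hx).continuousAt.eventually (lt_mem_nhds (hpos x hx))
  have sm : ∀ x, f x = 0 → ContDiffAt ℝ ∞ (fun y => Real.sqrt (F 0 y)) x := fun x hx =>
    (hF.smooth x hx).sqrt (hpos x hx).ne'
  have smi : ∀ x, f x = 0 → ContDiffAt ℝ ∞ (fun y => (Real.sqrt (F 0 y))⁻¹) x := fun x hx =>
    (sm x hx).inv (Real.sqrt_pos.2 (hpos x hx)).ne'
  have sma : ∀ x, f x = 0 → ContDiffAt ℝ ∞ (fun y => -((Real.sqrt (F 0 y) + Real.sqrt (F 0 y)) *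
      Real.sqrt (F 0 y) * Real.sqrt (F 0 y))⁻¹) x := fun x hx => by
    have := Real.sqrt_pos.2 (hpos x hx)
    exact (((((sm x hx).add (sm x hx)).mul (sm x hx)).mul (sm x hx)).inv (by positivity)).neg
  have ex : ∀ x, f x = 0 → ∃ Q, Expd m (fun r y => (Real.sqrt (F r y))⁻¹) Q x ∧
      (fun y => -((Real.sqrt (F 0 y) + Real.sqrt (F 0 y)) *
      Real.sqrt (F 0 y) * Real.sqrt (F 0 y))⁻¹ * lin F y) =ᶠ[𝓝 x] fun y => Q (0, y) := by
    intro x hx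
    obtain ⟨Q, hQ⟩ := hF.ex x hx
    have hE : ContDiffAt ℝ m (fun p : ℝ × Pt n => F 0 p.2 + p.1 * Q p) (0, x) :=
      (cd_snd (hF.smooth x hx) m).add (contDiffAt_fst.mul hQ.1)
    have hE0 : 0 < (fun p : ℝ × Pt n => F 0 p.2 + p.1 * Q p) (0, x) := by simpa using hpos x hx
    have hEs := hE.sqrt hE0.ne'
    have hs := cd_snd (sm x hx) m
    have p1 := Real.sqrt_pos.2 hE0
    have p2 := Real.sqrt_pos.2 (hpos x hx)
    refine ⟨fun p => -((Real.sqrt (F 0 p.2 + p.1 * Q p) + Real.sqrt (F 0 p.2)) *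
      Real.sqrt (F 0 p.2 + p.1 * Q p) * Real.sqrt (F 0 p.2))⁻¹ * Q p, ⟨?_, ?_⟩, ?_⟩
    · refine ((((hEs.add hs).mul hEs).mul hs).inv ?_).neg.mul hQ.1
      beta_reduce at p1 ⊢
      positivity
    · have hEp := hE.continuousAt.eventually (lt_mem_nhds hE0)
      filter_upwards [hQ.2, hEp, ev_snd (hev x hx)] with p h1 h2 h3
      rw [h1]
      have q1 := Real.sqrt_pos.2 h2
      have q2 := Real.sqrt_pos.2 h3
      have e1 := Real.mul_self_sqrt h2.le
      have e2 := Real.mul_self_sqrt h3.le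
      set A := Real.sqrt (F 0 p.2 + p.1 * Q p)
      set B := Real.sqrt (F 0 p.2)
      have e3 : p.1 * Q p = A * A - B * B := by rw [e1, e2]; ring
      have : p.1 * (-((A + B) * A * B)⁻¹ * Q p) = -((A + B) * A * B)⁻¹ * (p.1 * Q p) := by ring
      rw [this, e3]
      field_simp
      ring
    · filter_upwards [hQ.lin_eq] with y h1
      rw [h1]; simp
  refine ⟨smi, fun x hx => (ex x hx).imp fun Q h => h.1,
    (hF.vs.smul sma).congr (fun x hx => ?_) (by simp)⟩
  obtain ⟨Q, h1, h2⟩ := ex x hx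
  exact h2.trans h1.lin_eq.symm

theorem cd_det {E : Type*} [NormedAddCommGroup E] [NormedSpace ℝ E] {k : WithTop ℕ∞}
    {A : E → Matrix (Fin n) (Fin n) ℝ} {p : E} (hA : ∀ i j, ContDiffAt ℝ k (fun q => A q i j) p) :
    ContDiffAt ℝ k (fun q => (A q).det) p := by
  simp only [Matrix.det_apply]
  refine ContDiffAt.sum fun σ _ => ?_
  refine ContDiffAt.const_smul _ ?_
  exact contDiffAt_prod fun i _ => hA _ _

theorem cd_inv {E : Type*} [NormedAddCommGroup E] [NormedSpace ℝ E] {k : WithTop ℕ∞}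
    {A : E → Matrix (Fin n) (Fin n) ℝ} {p : E} (hA : ∀ i j, ContDiffAt ℝ k (fun q => A q i j) p)
    (hd : (A p).det ≠ 0) (i j : Fin n) : ContDiffAt ℝ k (fun q => (A q)⁻¹ i j) p := by
  simp only [Matrix.inv_def, Matrix.smul_apply, smul_eq_mul, Ring.inverse_eq_inv',
    Matrix.adjugate_apply]
  refine ((cd_det hA).inv hd).mul (cd_det fun a b => ?_)
  by_cases h : a = j
  · subst h; simp only [Matrix.updateRow_self]; exact contDiffAt_const
  · simp only [Matrix.updateRow_ne h]; exact hA a b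

/-- Background data: smoothness near the level set, nondegeneracy. -/
structure Bg (g : Pt n → Fin n → Fin n → ℝ) (f : Pt n → ℝ) : Prop where
  hf : ∀ x, f x = 0 → ContDiffAt ℝ ∞ f x
  hreg : ∀ x, f x = 0 → fderiv ℝ f x ≠ 0
  hg : ∀ i j x, f x = 0 → ContDiffAt ℝ ∞ (fun y => g y i j) x
  hsym : symT g
  hpos : posdef g

/-- Data on the perturbation: vanishing order, symbol, gauge. -/
structure Hd (g h : Pt n → Fin n → Fin n → ℝ) (f : Pt n → ℝ) (m : ℕ)
    (H : Fin n → Fin n → Pt n → ℝ) : Prop where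
  hV : ∀ i j, VS f m (fun y => h y i j) (H i j)
  hHs : ∀ i j x, f x = 0 → H i j x = H j i x
  hK : ∀ i x, f x = 0 → ∑ j, H i j x * gradV g f x j = 0

/-- Squared length of the gradient of `f`. -/
def qf (g : Pt n → Fin n → Fin n → ℝ) (f : Pt n → ℝ) (x : Pt n) : ℝ :=
  ∑ j, ∑ k, ginv g x j k * pd j f x * pd k f x

variable {g h : Pt n → Fin n → Fin n → ℝ} {m : ℕ} {H : Fin n → Fin n → Pt n → ℝ}

theorem mpert_zero (g h : Pt n → Fin n → Fin n → ℝ) : mpert g h 0 = g := by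
  funext y a b; simp [mpert]

theorem posDef_of (hs : symT g) (hp : posdef g) (x : Pt n) : (Matrix.of (g x)).PosDef := by
  refine Matrix.PosDef.of_dotProduct_mulVec_pos ?_ ?_
  · ext i j; simp [hs x j i]
  · intro v hv
    have := hp x v hv
    refine this.trans_eq ?_
    simp only [dotProduct, Matrix.mulVec, Pi.star_apply, star_trivial, Finset.mul_sum,
      Matrix.of_apply]
    exact Finset.sum_congr rfl fun i _ => Finset.sum_congr rfl fun j _ => by ring

theorem Bg.pd' (B : Bg g f) (x : Pt n) : (Matrix.of (g x)).PosDef := posDef_of B.hsym B.hpos x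

theorem Bg.det (B : Bg g f) (x : Pt n) : (Matrix.of (g x)).det ≠ 0 := (B.pd' x).det_pos.ne'

theorem Bg.ginv_symm (B : Bg g f) (x : Pt n) (i j : Fin n) : ginv g x i j = ginv g x j i := by
  have h1 : (Matrix.of (g x))⁻¹.IsHermitian := (B.pd' x).inv.1
  have := h1.apply i j
  simpa [ginv] using this.symm

theorem Bg.qpos (B : Bg g f) {x} (hx : f x = 0) : 0 < qf g f x := by
  have h1 : (Matrix.of (g x))⁻¹.PosDef := (B.pd' x).inv
  obtain ⟨i, hi⟩ := pd_ne B.hreg hx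
  have h2 := h1.dotProduct_mulVec_pos (x := fun i => pd i f x) (fun h => hi (congrFun h i))
  refine h2.trans_eq ?_
  simp only [dotProduct, Matrix.mulVec, Pi.star_apply, star_trivial, Finset.mul_sum, qf, ginv]
  exact Finset.sum_congr rfl fun i _ => Finset.sum_congr rfl fun j _ => by ring

theorem Bg.npd (B : Bg g f) (i : Fin n) : ∀ x, f x = 0 → ContDiffAt ℝ ∞ (pd i f) x :=
  fun x hx => pd_contDiffAt i (B.hf x hx) (by simp)

theorem Bg.ginv_smooth (B : Bg g f) (i j : Fin n) :
    ∀ x, f x = 0 → ContDiffAt ℝ ∞ (fun y => ginv g y i j) x :=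
  fun x hx => cd_inv (A := fun y => Matrix.of (g y)) (fun a b => B.hg a b x hx) (B.det x) i j

theorem Bg.chr_smooth (B : Bg g f) (k i j : Fin n) :
    ∀ x, f x = 0 → ContDiffAt ℝ ∞ (fun y => chr g y k i j) x := by
  intro x hx
  unfold chr
  refine contDiffAt_const.mul (ContDiffAt.sum fun l _ => (B.ginv_smooth k l x hx).mul ?_)
  have := fun a b c => pd_contDiffAt (m := ∞) a (B.hg b c x hx) (by simp)
  exact ((this i j l).add (this j i l)).sub (this l i j)

theorem PJ_met (B : Bg g f) (D : Hd g h f m H) (i j : Fin n) :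
    PJ f m (fun s y => mpert g h s y i j) (H i j) := by
  refine ⟨fun x hx => ?_, fun x hx => ⟨fun p => h p.2 i j, ?_, ?_⟩, ?_⟩
  · rw [mpert_zero]; exact B.hg i j x hx
  · exact ContDiffAt.comp (g := fun y => h y i j) (0, x) ((D.hV i j).reg hx) contDiffAt_snd
  · exact Filter.Eventually.of_forall fun p => by simp [mpert]
  · refine (D.hV i j).congr (fun x hx => Filter.Eventually.of_forall fun y => ?_) (fun _ _ => rfl)
    have : HasDerivAt (fun s : ℝ => mpert g h s y i j) (h y i j) 0 := by
      unfold mpert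
      simpa using ((hasDerivAt_id (0:ℝ)).mul_const (h y i j)).const_add (g y i j)
    exact this.deriv.symm

theorem PJ_ginv (B : Bg g f) (D : Hd g h f m H) (i j : Fin n) :
    PJ f m (fun s y => ginv (mpert g h s) y i j)
      (fun x => -∑ a, ∑ b, ginv g x i a * (ginv g x b j * H a b x)) := by
  have hex : ∀ x, f x = 0 → Expd m (fun s y => ginv (mpert g h s) y i j)
      (fun p => -∑ a, ∑ b, ginv (mpert g h p.1) p.2 i a * (ginv g p.2 b j * h p.2 a b)) x := by
    intro x hx
    have hcm : ∀ a b, ContDiffAt ℝ m (fun p : ℝ × Pt n => mpert g h p.1 p.2 a b) (0, x) := by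
      intro a b
      unfold mpert
      exact (cd_snd (B.hg a b x hx) m).add (contDiffAt_fst.mul
        (ContDiffAt.comp (g := fun y => h y a b) (0, x) ((D.hV a b).reg hx) contDiffAt_snd))
    have hd0 : (Matrix.of (mpert g h ((0:ℝ), x).1 ((0:ℝ), x).2)).det ≠ 0 := by
      simp only [mpert_zero]; exact B.det x
    have hci : ∀ a b, ContDiffAt ℝ m (fun p : ℝ × Pt n => ginv (mpert g h p.1) p.2 a b) (0, x) :=
      fun a b => cd_inv (A := fun p : ℝ × Pt n => Matrix.of (mpert g h p.1 p.2)) hcm hd0 a b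
    refine ⟨?_, ?_⟩
    · refine (ContDiffAt.sum fun a _ => ContDiffAt.sum fun b _ => (hci i a).mul
        ((cd_snd (B.ginv_smooth b j x hx) m).mul ?_)).neg
      exact ContDiffAt.comp (g := fun y => h y a b) (0, x) ((D.hV a b).reg hx) contDiffAt_snd
    · have hdc : ContDiffAt ℝ m (fun p : ℝ × Pt n => (Matrix.of (mpert g h p.1 p.2)).det) (0, x) :=
        cd_det hcm
      filter_upwards [hdc.continuousAt.eventually_ne hd0] with p hp
      have e1 : IsUnit (Matrix.of (mpert g h p.1 p.2)).det := isUnit_iff_ne_zero.2 hp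
      have e2 : IsUnit (Matrix.of (g p.2)).det := isUnit_iff_ne_zero.2 (B.det p.2)
      have e3 : Matrix.of (mpert g h p.1 p.2) = Matrix.of (g p.2) + p.1 • Matrix.of (h p.2) := by
        ext a b; simp [mpert]
      set M := Matrix.of (mpert g h p.1 p.2) with hM
      set A := Matrix.of (g p.2) with hA
      have e4 : A⁻¹ = M⁻¹ + p.1 • (M⁻¹ * Matrix.of (h p.2) * A⁻¹) := by
        calc A⁻¹ = M⁻¹ * M * A⁻¹ := by rw [Matrix.nonsing_inv_mul _ e1, one_mul]
          _ = M⁻¹ * (A + p.1 • Matrix.of (h p.2)) * A⁻¹ := by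
              rw [← e3]
          _ = _ := by
              rw [mul_add, add_mul, mul_assoc, Matrix.mul_nonsing_inv _ e2, mul_one,
                Matrix.mul_smul, Matrix.smul_mul]
      have e5 := congrFun (congrFun e4 i) j
      simp only [Matrix.add_apply, Matrix.smul_apply, Matrix.mul_apply, smul_eq_mul,
        Matrix.of_apply, Finset.sum_mul] at e5
      rw [Finset.sum_comm] at e5
      simp only [ginv, mpert_zero]
      rw [← hM, ← hA, e5]
      simp only [mul_neg, Finset.mul_sum]
      rw [add_assoc, ← sub_eq_add_neg, ← Finset.sum_sub_distrib]
      refine (add_eq_left.2 (Finset.sum_eq_zero fun a _ => ?_)).symm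
      rw [← Finset.sum_sub_distrib]
      refine Finset.sum_eq_zero fun b _ => ?_
      ring
  refine ⟨fun x hx => ?_, fun x hx => ⟨_, hex x hx⟩, ?_⟩
  · simp only [mpert_zero]; exact B.ginv_smooth i j x hx
  · have : VS f m (fun x => -∑ a, ∑ b, ginv g x i a * (ginv g x b j * h x a b))
        (fun x => -∑ a, ∑ b, ginv g x i a * (ginv g x b j * H a b x)) :=
      (VS.sum _ fun a => VS.sum _ fun b => VS.smul (B.ginv_smooth i a)
        (VS.smul (B.ginv_smooth b j) (D.hV a b))).neg
    refine this.congr (fun x hx => ?_) (fun _ _ => rfl)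
    refine Filter.EventuallyEq.trans ?_ (hex x hx).lin_eq.symm
    simp only [mpert_zero]
    exact Filter.EventuallyEq.rfl

/-- Symbol of the linearized Christoffel symbols. -/
def CS (g : Pt n → Fin n → Fin n → ℝ) (f : Pt n → ℝ) (H : Fin n → Fin n → Pt n → ℝ)
    (k i j : Fin n) (x : Pt n) : ℝ :=
  (1/2) * ∑ l, ginv g x k l * (pd i f x * H j l x + pd j f x * H i l x - pd l f x * H i j x)

theorem PJ_chr (B : Bg g f) (D : Hd g h f (m+1) H) (k i j : Fin n) :
    PJ f m (fun s y => chr (mpert g h s) y k i j) (CS g f H k i j) := by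
  have h1 := fun a b c => (PJ_met B D b c).pd a
  have h2 := (PJ.const (f := f) m (a := fun _ => 1/2) (fun _ _ => contDiffAt_const)).mul
    (PJ.sum Finset.univ fun l => (PJ_ginv B D k l).weaken.mul
      (((h1 i j l).add (h1 j i l)).sub (h1 l i j)))
  refine PJ.congrS h2 fun x hx => ?_
  simp [CS, mpert_zero]

theorem PJ_riem (B : Bg g f) (D : Hd g h f (m+2) H) (l i j k : Fin n) :
    PJ f m (fun s y => riem (mpert g h s) y l i j k)
      (fun x => pd j f x * CS g f H l i k x - pd k f x * CS g f H l i j x) := by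
  have h1 := fun a b c => PJ_chr B D a b c
  have h0 := fun a b c => (h1 a b c).weaken
  have h2 := ((((h1 l i k).pd j).sub ((h1 l i j).pd k)).add
    (PJ.sum Finset.univ fun a => (h0 l a j).mul (h0 a i k))).sub
    (PJ.sum Finset.univ fun a => (h0 l a k).mul (h0 a i j))
  refine PJ.congrS h2 fun x hx => ?_
  simp

/-- Symbol of the linearized Ricci tensor. -/
def RS (g : Pt n → Fin n → Fin n → ℝ) (f : Pt n → ℝ) (H : Fin n → Fin n → Pt n → ℝ)
    (i j : Fin n) (x : Pt n) : ℝ :=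
  -(1/2) * (qf g f x * H i j x + pd i f x * pd j f x * ∑ l, ∑ p, ginv g x l p * H l p x)

theorem CS_contr (B : Bg g f) (D : Hd g h f m H) (i j : Fin n) {x} (hx : f x = 0) :
    ∑ l, pd l f x * CS g f H l i j x = -(1/2) * (qf g f x * H i j x) := by
  have hk : ∀ a, ∑ l, ∑ p, pd l f x * ginv g x l p * H a p x = 0 := by
    intro a
    rw [← D.hK a x hx, Finset.sum_comm]
    refine Finset.sum_congr rfl fun p _ => ?_
    simp only [gradV, Finset.mul_sum]
    refine Finset.sum_congr rfl fun l _ => ?_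
    rw [B.ginv_symm x p l]; ring
  have : ∑ l, pd l f x * CS g f H l i j x = (1/2) * (pd i f x *
      (∑ l, ∑ p, pd l f x * ginv g x l p * H j p x) + pd j f x *
      (∑ l, ∑ p, pd l f x * ginv g x l p * H i p x) - qf g f x * H i j x) := by
    simp only [CS, qf, Finset.mul_sum, Finset.sum_mul, ← Finset.sum_add_distrib,
      ← Finset.sum_sub_distrib]
    refine Finset.sum_congr rfl fun l _ => Finset.sum_congr rfl fun p _ => ?_
    ring
  rw [this, hk, hk]; ring

theorem CS_tr (B : Bg g f) (i : Fin n) (x : Pt n) :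
    ∑ l, CS g f H l i l x = (1/2) * (pd i f x * ∑ l, ∑ p, ginv g x l p * H l p x) := by
  have h1 : ∑ l, ∑ p, ginv g x l p * (pd l f x * H i p x) =
      ∑ l, ∑ p, ginv g x l p * (pd p f x * H i l x) := by
    rw [Finset.sum_comm]
    refine Finset.sum_congr rfl fun l _ => Finset.sum_congr rfl fun p _ => ?_
    rw [B.ginv_symm x p l]
  have : ∑ l, CS g f H l i l x = (1/2) * (pd i f x * (∑ l, ∑ p, ginv g x l p * H l p x) +
      ((∑ l, ∑ p, ginv g x l p * (pd l f x * H i p x)) -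
      ∑ l, ∑ p, ginv g x l p * (pd p f x * H i l x))) := by
    simp only [CS, Finset.mul_sum, ← Finset.sum_add_distrib,
      ← Finset.sum_sub_distrib]
    refine Finset.sum_congr rfl fun l _ => Finset.sum_congr rfl fun p _ => ?_
    ring
  rw [this, h1]; ring

theorem PJ_ric (B : Bg g f) (D : Hd g h f (m+2) H) (i j : Fin n) :
    PJ f m (fun s y => ric (mpert g h s) y i j) (RS g f H i j) := by
  have h2 := PJ.sum Finset.univ fun l => PJ_riem B D l i l j
  refine PJ.congrS h2 fun x hx => ?_
  rw [Finset.sum_sub_distrib, CS_contr B D i j hx, ← Finset.mul_sum, CS_tr B i x]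
  unfold RS; ring

theorem symb_zero (D : Hd g h f m H) (i : Fin n) {x} (hx : f x = 0) :
    ∑ j, pd j f x * (-∑ a, ∑ b, ginv g x i a * (ginv g x b j * H a b x)) = 0 := by
  have : ∑ j, pd j f x * (-∑ a, ∑ b, ginv g x i a * (ginv g x b j * H a b x)) =
      -∑ a, ginv g x i a * ∑ b, H a b x * gradV g f x b := by
    simp only [gradV, Finset.mul_sum, mul_neg, Finset.sum_neg_distrib]
    congr 1
    rw [Finset.sum_comm]
    refine Finset.sum_congr rfl fun a _ => ?_
    rw [Finset.sum_comm]
    refine Finset.sum_congr rfl fun b _ => Finset.sum_congr rfl fun j _ => ?_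
    ring
  rw [this]
  simp [D.hK _ x hx]

theorem PJ_gradV (B : Bg g f) (D : Hd g h f m H) (i : Fin n) :
    PJ f m (fun s y => gradV (mpert g h s) f y i) (fun _ => 0) := by
  have h2 := PJ.sum Finset.univ fun j => (PJ_ginv B D i j).mul (PJ.const m (B.npd j))
  refine PJ.congrS h2 fun x hx => ?_
  simp only [mul_zero, zero_add]
  exact symb_zero D i hx

theorem PJ_q (B : Bg g f) (D : Hd g h f m H) :
    PJ f m (fun s y => qf (mpert g h s) f y) (fun _ => 0) := by
  have h2 := PJ.sum Finset.univ fun j => PJ.sum Finset.univ fun k =>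
    ((PJ_ginv B D j k).mul (PJ.const m (B.npd j))).mul (PJ.const m (B.npd k))
  refine PJ.congrS h2 fun x hx => ?_
  simp only [mul_zero, zero_add]
  refine Finset.sum_eq_zero fun j _ => ?_
  rw [← mul_zero (pd j f x), ← symb_zero D j hx, Finset.mul_sum]
  refine Finset.sum_congr rfl fun k _ => ?_
  ring

theorem PJ_nu (B : Bg g f) (D : Hd g h f m H) (i : Fin n) :
    PJ f m (fun s y => nuV (mpert g h s) f y i) (fun _ => 0) := by
  have h2 := (PJ_gradV B D i).mul ((PJ_q B D).invSqrt (fun x hx => by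
    rw [mpert_zero]; exact B.qpos hx))
  refine PJ.congrS h2 fun x hx => ?_
  simp

theorem Bg.nu_n (B : Bg g f) (x : Pt n) :
    ∑ l, nuV g f x l * pd l f x = Real.sqrt (qf g f x) := by
  have : ∑ l, nuV g f x l * pd l f x = qf g f x / Real.sqrt (qf g f x) := by
    simp only [nuV, gradV]
    change ∑ l, (∑ j, ginv g x l j * pd j f x) / Real.sqrt (qf g f x) * pd l f x = _
    generalize Real.sqrt (qf g f x) = r
    rw [qf, Finset.sum_div]
    refine Finset.sum_congr rfl fun l _ => ?_
    simp only [Finset.sum_div, Finset.sum_mul]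
    refine Finset.sum_congr rfl fun p _ => ?_
    ring
  rw [this, Real.div_sqrt]

theorem PJ_nuRic (B : Bg g f) (k : ℕ) : ∀ m, Hd g h f (m+k+2) H → ∀ i j : Fin n,
    PJ f m (fun s y => nuRic (mpert g h s) f k y i j)
      (fun x => Real.sqrt (qf g f x) ^ k * RS g f H i j x) := by
  induction k with
  | zero =>
    intro m D i j
    exact (PJ_ric B D i j).congrS (by simp)
  | succ k ih =>
    intro m D i j
    have D' : Hd g h f (m+1+k+2) H := by
      have : m + (k+1) + 2 = m+1+k+2 := by ring
      rwa [this] at D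
    have hn : ∀ l, PJ f m (fun s y => nuV (mpert g h s) f y l) (fun _ => 0) := by
      have : ∀ (r M : ℕ), Hd g h f (r + M) H →
          ∀ l, PJ f r (fun s y => nuV (mpert g h s) f y l) (fun _ => 0) := by
        intro r M
        induction M generalizing r with
        | zero => exact fun D l => PJ_nu B D l
        | succ M ihM =>
          intro D l
          exact (ihM (r+1) (by rwa [show r + 1 + M = r + (M+1) by ring]) l).weaken
      exact this m (k+1+2) D
    have hc : ∀ a b c, PJ f m (fun s y => chr (mpert g h s) y a b c) (fun _ => 0) := by
      have : ∀ (M r : ℕ), Hd g h f (r + M + 2) H →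
          ∀ a b c, PJ f r (fun s y => chr (mpert g h s) y a b c) (fun _ => 0) := by
        intro M
        induction M with
        | zero => exact fun r D a b c => (PJ_chr B D a b c).weaken
        | succ M ihM =>
          intro r D a b c
          exact (ihM (r+1) (by rwa [show r + 1 + M = r + (M+1) by ring]) a b c).weaken
      exact this (k+1) m D
    have hR := ih (m+1) D'
    have h2 := PJ.sum Finset.univ fun l => (hn l).mul
      ((((hR i j).pd l).sub (PJ.sum Finset.univ fun p => (hc p i l).mul (hR p j).weaken)).sub
        (PJ.sum Finset.univ fun p => (hc p j l).mul (hR i p).weaken))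
    refine PJ.congrS h2 fun x hx => ?_
    simp only [mul_zero, add_zero, Finset.sum_const_zero, sub_zero, mpert_zero]
    rw [pow_succ, ← B.nu_n x, Finset.mul_sum, Finset.sum_mul]
    refine Finset.sum_congr rfl fun l _ => ?_
    ring

theorem Bg.lower_nu (B : Bg g f) (x : Pt n) (i : Fin n) :
    lowerV g (nuV g f) x i = (Real.sqrt (qf g f x))⁻¹ * pd i f x := by
  have e2 : IsUnit (Matrix.of (g x)).det := isUnit_iff_ne_zero.2 (B.det x)
  have h1 := Matrix.mul_nonsing_inv _ e2
  have h2 : ∀ k, ∑ j, g x i j * ginv g x j k = if i = k then 1 else 0 := by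
    intro k
    have := congrFun (congrFun h1 i) k
    simpa [Matrix.mul_apply, Matrix.one_apply, ginv] using this
  have : lowerV g (nuV g f) x i =
      (Real.sqrt (qf g f x))⁻¹ * ∑ k, (∑ j, g x i j * ginv g x j k) * pd k f x := by
    simp only [lowerV, nuV, gradV, Finset.mul_sum, Finset.sum_mul, Finset.sum_div]
    rw [Finset.sum_comm]
    refine Finset.sum_congr rfl fun l _ => Finset.sum_congr rfl fun p _ => ?_
    rw [← qf]; ring
  rw [this]
  simp [h2]

theorem PJ_lower (B : Bg g f) (D : Hd g h f m H) (i : Fin n) :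
    PJ f m (fun s y => lowerV (mpert g h s) (nuV (mpert g h s) f) y i) (fun _ => 0) := by
  have h2 := PJ.sum Finset.univ fun j => (PJ_met B D i j).mul (PJ_nu B D j)
  refine PJ.congrS h2 fun x hx => ?_
  simp only [mul_zero, zero_add, mpert_zero, nuV]
  have : ∀ j, gradV g f x j / Real.sqrt (∑ j, ∑ k, ginv g x j k * pd j f x * pd k f x) * H i j x =
    (Real.sqrt (∑ j, ∑ k, ginv g x j k * pd j f x * pd k f x))⁻¹ * (H i j x * gradV g f x j) := by
    intro j; ring
  simp only [this, ← Finset.mul_sum, D.hK i x hx, mul_zero]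

theorem PJ_sff (B : Bg g f) (D : Hd g h f (m+1) H) (i j : Fin n) :
    PJ f m (fun s y => sff (mpert g h s) f y i j)
      (fun x => (1/2) * ((Real.sqrt (qf g f x))⁻¹ * qf g f x) * H i j x) := by
  have hcd : ∀ i j, PJ f m
      (fun s y => cdCov (mpert g h s) (lowerV (mpert g h s) (nuV (mpert g h s) f)) y i j)
      (fun x => (1/2) * ((Real.sqrt (qf g f x))⁻¹ * qf g f x) * H i j x) := by
    intro i j
    have h2 := ((PJ_lower B D i).pd j).sub
      (PJ.sum Finset.univ fun k => (PJ_chr B D k i j).mul (PJ_lower B D k).weaken)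
    refine PJ.congrS h2 fun x hx => ?_
    simp only [mul_zero, zero_add, zero_sub, mpert_zero, B.lower_nu]
    have h3 := CS_contr B D i j hx
    simp only [mul_assoc, ← Finset.mul_sum, h3]
    ring
  have h2 := (PJ.const (f := f) m (a := fun _ => 1/2) (fun _ _ => contDiffAt_const)).mul
    ((hcd i j).add (hcd j i))
  refine PJ.congrS h2 fun x hx => ?_
  simp only [mul_zero, add_zero]
  rw [D.hHs j i x hx]; ring

theorem Bg.grad_n (x : Pt n) : ∑ l, gradV g f x l * pd l f x = qf g f x := by
  simp only [gradV, qf, Finset.sum_mul]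
  exact Finset.sum_congr rfl fun l _ => Finset.sum_congr rfl fun p _ => by ring

theorem lin_alg (B : Bg g f) {x : Pt n} (hx : f x = 0) (S : Fin n → Fin n → ℝ)
    (hS : ∀ i j, S i j = S j i) (hK : ∀ i, ∑ j, S i j * gradV g f x j = 0)
    (hT : ∀ v w : Fin n → ℝ, Tang f x v → Tang f x w → ∑ i, ∑ j, S i j * v i * w j = 0)
    (i j : Fin n) : S i j = 0 := by
  have hq := (B.qpos hx).ne'
  let v : Fin n → Fin n → ℝ := fun i a =>
    (if a = i then 1 else 0) - pd i f x / qf g f x * gradV g f x a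
  have hv : ∀ i, Tang f x (v i) := by
    intro i
    unfold Tang
    rw [pd_sum_single]
    simp only [v, sub_mul, Finset.sum_sub_distrib, mul_assoc, ← Finset.mul_sum, Bg.grad_n]
    simp
    field_simp
    ring
  have hc : ∀ a i, ∑ b, S a b * v i b = S a i := by
    intro a i
    have : ∀ b, S a b * v i b = (if b = i then S a b else 0) -
        pd i f x / qf g f x * (S a b * gradV g f x b) := by
      intro b
      simp only [v]
      split_ifs <;> ring
    simp only [this, Finset.sum_sub_distrib, ← Finset.mul_sum, hK]
    simp
  have h1 := hT (v i) (v j) (hv i) (hv j)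
  have h2 : ∑ a, ∑ b, S a b * v i a * v j b = S i j := by
    have : ∀ a, ∑ b, S a b * v i a * v j b = S j a * v i a := by
      intro a
      rw [hS j a, ← hc a j, Finset.sum_mul]
      exact Finset.sum_congr rfl fun b _ => by ring
    simp only [this, hc]
    exact hS j i
  rw [← h2, h1]

theorem tang_sum {x : Pt n} {v : Fin n → ℝ} (h : Tang f x v) : ∑ i, pd i f x * v i = 0 := by
  unfold Tang at h
  rw [pd_sum_single] at h
  rw [← h]
  exact Finset.sum_congr rfl fun i _ => by ring

theorem RS_tang {x : Pt n} {v w : Fin n → ℝ} (hv : Tang f x v) (c : ℝ) :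
    ∑ i, ∑ j, (c * RS g f H i j x) * v i * w j =
      (c * (-(1/2) * qf g f x)) * ∑ i, ∑ j, H i j x * v i * w j := by
  have h1 : ∑ i, ∑ j, (c * RS g f H i j x) * v i * w j =
      (c * (-(1/2) * qf g f x)) * (∑ i, ∑ j, H i j x * v i * w j) +
      (∑ i, pd i f x * v i) * (∑ j, pd j f x * w j) *
        (c * (-(1/2)) * ∑ l, ∑ p, ginv g x l p * H l p x) := by
    unfold RS
    generalize (∑ l, ∑ p, ginv g x l p * H l p x) = t
    rw [Finset.sum_mul_sum]
    simp only [Finset.mul_sum, Finset.sum_mul, ← Finset.sum_add_distrib]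
    exact Finset.sum_congr rfl fun i _ => Finset.sum_congr rfl fun j _ => by ring
  rw [h1, tang_sum hv]; ring

theorem VS_cdT {r : ℕ} (B : Bg g f) {T : Pt n → (Fin r → Fin n) → ℝ}
    (hT : ∀ I, VS f (m+1) (fun y => T y I) (fun _ => 0)) (I : Fin (r+1) → Fin n) :
    VS f m (fun y => cdT g T y I) (fun _ => 0) := by
  have h1 := (((hT (fun a => I a.castSucc)).2 (I (Fin.last r))).add
    (VS.sum Finset.univ fun a : Fin r => VS.sum Finset.univ fun k =>
      (VS.smul (B.chr_smooth k (I a.castSucc) (I (Fin.last r)))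
        (hT (Function.update (fun m' => I m'.castSucc) a k)).weaken)).neg)
  refine h1.congr (fun x _ => Filter.Eventually.of_forall fun y => ?_) (by simp)
  simp [cdT, sub_eq_add_neg]

theorem VS_it (B : Bg g f) {M : ℕ} (hV : ∀ i j, VS f M (fun y => h y i j) (fun _ => 0)) (j : ℕ) :
    ∀ p, p + j = M → ∀ I, VS f p (fun y => itCDh g h j y I) (fun _ => 0) := by
  induction j with
  | zero => rintro p rfl I; exact hV _ _
  | succ j ih =>
    intro p hp I
    exact VS_cdT B (ih (p+1) (by omega)) I

theorem reg_it (B : Bg g f) {M : ℕ} (hh : ∀ i j, ContDiff ℝ M (fun y => h y i j)) (j : ℕ) :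
    ∀ p, p + j = M → ∀ I, ∀ x, f x = 0 → ContDiffAt ℝ p (fun y => itCDh g h j y I) x := by
  induction j with
  | zero => rintro p rfl I x hx; exact (hh _ _).contDiffAt
  | succ j ih =>
    intro p hp I x hx
    have h1 := ih (p+1) (by omega)
    simp only [itCDh, cdT]
    refine (pd_contDiffAt _ (h1 _ x hx) (by norm_cast)).sub (ContDiffAt.sum fun a _ =>
      ContDiffAt.sum fun k _ => ((B.chr_smooth _ _ _ x hx).of_le (by exact_mod_cast le_top)).mul
        ((h1 _ x hx).of_le (by exact_mod_cast Nat.le_succ _)))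

theorem it_VS (B : Bg g f) {M : ℕ} (hh : ∀ i j, ContDiff ℝ M (fun y => h y i j))
    (hz : ∀ j ≤ M, ∀ x, f x = 0 → ∀ I, itCDh g h j x I = 0) (p : ℕ) :
    ∀ j, j + p ≤ M → ∀ I, VS f p (fun y => itCDh g h j y I) (fun _ => 0) := by
  have hreg : ∀ p j, j + p ≤ M → ∀ I x, f x = 0 →
      ContDiffAt ℝ p (fun y => itCDh g h j y I) x := by
    intro p j hp I x hx
    exact (reg_it B hh j (M - j) (by omega) I x hx).of_le (by norm_cast; omega)
  induction p with
  | zero => exact fun j hj I x hx => ⟨hreg 0 j hj I x hx, hz j hj x hx I⟩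
  | succ p ih =>
    intro j hj I
    refine ⟨fun x hx => ⟨hreg (p+1) j hj I x hx, hz j (by omega) x hx I⟩, fun i => ?_⟩
    have h1 := (ih (j+1) (by omega) (Fin.snoc (α := fun _ => Fin n) I i)).add
      (VS.sum Finset.univ fun a : Fin (j+2) => VS.sum Finset.univ fun k =>
      (VS.smul (B.chr_smooth k (I a) i)
        (ih j (by omega) (Function.update I a k))))
    refine h1.congr (fun x _ => Filter.Eventually.of_forall fun y => ?_) (by simp)
    simp [itCDh, cdT]

theorem gauge_H (B : Bg g f) (hhs : symT h)
    (hga : ∀ x, f x = 0 → ∀ i, ∀ᶠ y in 𝓝 x, ∑ j, h y i j * nuV g f y j = 0)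
    (hV : ∀ i j, VS f m (fun y => h y i j) (H i j)) : Hd g h f m H := by
  refine ⟨hV, fun i j x hx => ?_, fun i x hx => ?_⟩
  · refine VS.unique B.hreg (hV i j) ((hV j i).congr ?_ (fun _ _ => rfl)) hx
    exact fun x _ => Filter.Eventually.of_forall fun y => hhs y j i
  · have hsm : ∀ j x, f x = 0 → ContDiffAt ℝ ∞ (fun y => gradV g f y j) x := by
      intro j x hx
      unfold gradV
      exact ContDiffAt.sum fun k _ => (B.ginv_smooth j k x hx).mul (B.npd k x hx)
    have h1 := VS.sum Finset.univ fun j => VS.smul (hsm j) (hV i j)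
    have hqc : ∀ x, f x = 0 → ∀ᶠ y in 𝓝 x, 0 < qf g f y := by
      intro x hx
      have : ContDiffAt ℝ ∞ (fun y => qf g f y) x := by
        unfold qf
        exact ContDiffAt.sum fun j _ => ContDiffAt.sum fun k _ =>
          ((B.ginv_smooth j k x hx).mul (B.npd j x hx)).mul (B.npd k x hx)
      exact this.continuousAt.eventually (lt_mem_nhds (B.qpos hx))
    have h2 := VS.unique B.hreg h1 ((VS.zero m).congr (fun x hx => ?_) (fun _ _ => rfl)) hx
    · rw [← h2]
      exact Finset.sum_congr rfl fun j _ => by ring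
    · filter_upwards [hga x hx i, hqc x hx] with y h3 h4
      have h5 : ∑ j, h y i j * nuV g f y j =
          (Real.sqrt (qf g f y))⁻¹ * ∑ j, gradV g f y j * h y i j := by
        rw [Finset.mul_sum]
        refine Finset.sum_congr rfl fun j _ => ?_
        rw [nuV, ← qf]; ring
      rw [h5] at h3
      have h6 := Real.sqrt_pos.2 h4
      rcases mul_eq_zero.1 h3 with h7 | h7
      · exact absurd h7 (by positivity)
      · exact h7.symm

end Aux

/-- for `h` in geodesic gauge near the hypersurface `Σ = f⁻¹(0)`
(with parallel unit normal), the boundary conditions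
`h^⊤ = 0, A'(h) = 0, ((∇^k_ν Ric)'(h))^⊤ = 0 (k = 0,…,ℓ)` on `Σ`
are equivalent to
`h = 0, ∇h = 0, ∇^{k+2}h = 0 (k = 0,…,ℓ)` on `Σ`. -/
theorem statement14 {n : ℕ} (ℓ : ℕ)
    (g h : Pt n → Fin n → Fin n → ℝ) (f : Pt n → ℝ)
    (W : Set (Pt n)) (hW : IsOpen W) (hSW : f ⁻¹' {(0:ℝ)} ⊆ W)
    (hgsym : symT g) (hgpos : posdef g)
    (hgan : ∀ i j, AnalyticOnNhd ℝ (fun x => g x i j) W)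
    (hfan : AnalyticOnNhd ℝ f W)
    (hreg : ∀ x ∈ f ⁻¹' {(0:ℝ)}, fderiv ℝ f x ≠ 0)
    (hhsym : symT h) (hhreg : ∀ i j, ContDiff ℝ (ℓ+2) (fun x => h x i j))
    -- the unit normal is extended parallelly: `∇_ν ν = 0` near `Σ`
    (hpar : ∀ x ∈ W, ∀ i : Fin n, ∑ j, nuV g f x j * cdVec g (nuV g f) x i j = 0)
    -- geodesic gauge: `h(ν,·) = 0` in a collar neighborhood of `Σ`
    (hgauge : ∀ x ∈ W, ∀ i : Fin n, ∑ j, h x i j * nuV g f x j = 0) :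
    ((∀ x ∈ f ⁻¹' {(0:ℝ)}, ∀ v w : Fin n → ℝ, Tang f x v → Tang f x w →
        ∑ i, ∑ j, h x i j * v i * w j = 0) ∧
     (∀ x ∈ f ⁻¹' {(0:ℝ)}, ∀ v w : Fin n → ℝ, Tang f x v → Tang f x w →
        ∑ i, ∑ j, sffLin g h f x i j * v i * w j = 0) ∧
     (∀ k ≤ ℓ, ∀ x ∈ f ⁻¹' {(0:ℝ)}, ∀ v w : Fin n → ℝ, Tang f x v → Tang f x w →
        ∑ i, ∑ j, nuRicLin g h f k x i j * v i * w j = 0))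
    ↔
    ((∀ x ∈ f ⁻¹' {(0:ℝ)}, ∀ i j, h x i j = 0) ∧
     (∀ x ∈ f ⁻¹' {(0:ℝ)}, ∀ I : Fin 3 → Fin n, itCDh g h 1 x I = 0) ∧
     (∀ k ≤ ℓ, ∀ x ∈ f ⁻¹' {(0:ℝ)}, ∀ I : Fin (k+4) → Fin n,
        itCDh g h (k+2) x I = 0)) := by
  have hx' : ∀ x, f x = 0 → W ∈ nhds x := fun x hx => hW.mem_nhds (hSW hx)
  have B : Bg g f := ⟨fun x hx => (hfan x (hSW hx)).contDiffAt, fun x hx => hreg x hx,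
    fun i j x hx => (hgan i j x (hSW hx)).contDiffAt, hgsym, hgpos⟩
  have hga : ∀ x, f x = 0 → ∀ i, ∀ᶠ y in nhds x, ∑ j, h y i j * nuV g f y j = 0 := by
    intro x hx i
    filter_upwards [hx' x hx] with y hy using hgauge y hy i
  have hh : ∀ m ≤ ℓ + 2, ∀ i j, ContDiff ℝ m (fun x => h x i j) := fun m hm i j =>
    (hhreg i j).of_le (by exact_mod_cast hm)
  constructor
  · rintro ⟨h1, h2, h3⟩
    have key : ∀ m ≤ ℓ + 2, ∀ i j, VS f m (fun y => h y i j) (fun _ => 0) := by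
      intro m
      induction m with
      | zero =>
        intro _
        have hV : ∀ i j, VS f 0 (fun y => h y i j) (fun y => h y i j) := fun i j x _ =>
          ⟨(hh 0 (by omega) i j).contDiffAt, rfl⟩
        have D := gauge_H B hhsym hga hV
        exact fun i j => (hV i j).congrS fun x hx =>
          lin_alg B hx (h x) (hhsym x) (fun a => D.hK a x hx) (h1 x hx) i j
      | succ m ih =>
        intro hm
        have hup := fun i j => VS.upgrade B.hf B.hreg (ih (by omega) i j)
          (fun x _ => (hh (m+1) hm i j).contDiffAt)
        choose H hV using hup
        have D := gauge_H B hhsym hga hV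
        refine fun i j => (hV i j).congrS fun x hx => ?_
        refine lin_alg B hx (fun a b => H a b x) (fun a b => D.hHs a b x hx)
          (fun a => D.hK a x hx) (fun v w hv hw => ?_) i j
        have hq := B.qpos hx
        have hs := Real.sqrt_pos.2 hq
        cases m with
        | zero =>
          have h4 := h2 x hx v w hv hw
          have h5 : ∀ a b, sffLin g h f x a b = _ := fun a b => ((PJ_sff B D a b).vs x hx).2
          simp only [h5, mul_assoc, ← Finset.mul_sum] at h4
          have h6 : (1/2 : ℝ) * ((Real.sqrt (qf g f x))⁻¹ * qf g f x) ≠ 0 := by positivity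
          simp only [mul_assoc]
          refine (mul_eq_zero.1 ?_).resolve_left h6
          rw [← h4]; ring
        | succ k =>
          have h4 := h3 k (by omega) x hx v w hv hw
          have D' : Hd g h f (0+k+2) H := by
            rw [show 0 + k + 2 = k + 1 + 1 by ring]; exact D
          have h5 : ∀ a b, nuRicLin g h f k x a b = _ := fun a b =>
            ((PJ_nuRic B k 0 D' a b).vs x hx).2
          simp only [h5] at h4
          rw [RS_tang hv] at h4
          refine (mul_eq_zero.1 h4).resolve_left ?_
          have : Real.sqrt (qf g f x) ^ k * (1/2 * qf g f x) ≠ 0 := by positivity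
          intro h0
          apply this
          linarith
    have hit := VS_it (M := ℓ + 2) B (key (ℓ+2) le_rfl)
    refine ⟨fun x hx i j => ?_, fun x hx I => ?_, fun k hk x hx I => ?_⟩
    · exact (key (ℓ+2) le_rfl i j).value hx
    · exact (hit 1 (ℓ+1) (by omega) I).value hx
    · exact (hit (k+2) (ℓ-k) (by omega) I).value hx
  · rintro ⟨h1, h2, h3⟩
    have hz : ∀ j ≤ ℓ + 2, ∀ x, f x = 0 → ∀ I, itCDh g h j x I = 0 := by
      intro j hj x hx I
      match j, hj, I with
      | 0, _, I => exact h1 x hx _ _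
      | 1, _, I => exact h2 x hx I
      | k+2, hk, I => exact h3 k (by omega) x hx I
    have hV : ∀ i j, VS f (ℓ+2) (fun y => h y i j) (fun _ => 0) := fun i j =>
      it_VS B (hh (ℓ+2) le_rfl) hz (ℓ+2) 0 (by omega) ![i, j]
    have D : Hd g h f (ℓ+2) (fun _ _ _ => 0) := ⟨hV, fun _ _ _ _ => rfl, by simp⟩
    refine ⟨fun x hx v w _ _ => ?_, fun x hx v w _ _ => ?_, fun k hk x hx v w _ _ => ?_⟩
    · simp [h1 x hx]
    · have : ∀ i j, sffLin g h f x i j = 0 := fun i j =>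
        ((PJ_sff (m := ℓ+1) B D i j).vs.congrS (by simp)).value hx
      simp [this]
    · have D' : Hd g h f ((ℓ-k)+k+2) (fun _ _ _ => 0) := by
        rwa [show (ℓ-k)+k+2 = ℓ+2 by omega]
      have : ∀ i j, nuRicLin g h f k x i j = 0 := fun i j =>
        ((PJ_nuRic B k (ℓ-k) D' i j).vs.congrS (by simp [RS])).value hx
      simp [this]
end
end
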